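/- arXiv:2507.15616 — 7 statements merged into one kernel-verified Lean document; each statement's English description precedes it below -/
import Mathlib

section
/- Assume γ_2 = 0. For every ε ∈ (0,1), the probability over the Gaussian disorder G that the entire function Z_G has at least one zero in the open disk D(0, (1−ε)·β_2nd) tends to 0 as n → ∞; equivalently, with probability 1 − o_n(1), Z_G is nonzero on D(0, (1−ε)·β_2nd). -/
/-!
The normalized partition function `W(β) = Z_G(β) / E Z_G(β)` is entire in `β`, has mean `1` and
vanishes exactly where `Z_G` does. Its variance at a complex `β` is
`2⁻ⁿ ∑_τ (exp(|β|² n ξ(m_τ)) - 1)` (`dev_second_moment`), where `m_τ` is the magnetization per spin,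
so it depends only on `|β|` and is the same quantity as in the real second moment method.

This variance tends to `0` for `|β| = r < β_2nd` (`variance_le`, `variance_bound_tendsto`).
Configurations with `|m_τ| ≤ n^{-2/5}` contribute little since `γ₂ = 0` makes `n ξ(m) = O(n |m|³)`.
For the others, the threshold condition gives `r² ξ(m) ≤ -θ h(m)` with some `θ < 1`, while
`2⁻ⁿ ∑_τ exp(-n h(m_τ)) ≤ n + 1` (`sum_exp_entH_le`) and `h(m) ≤ -m²/4`, so they contribute at most
`(n + 1) exp(-(1-θ) n^{1/5} / 4)`.

Finally, at a zero of `Z_G` the entire function `(W - 1)²` equals `1`. By Cauchy's formula its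
modulus then has mean bounded below on a slightly larger circle (`circle_bound`), and by Markov's
inequality and Tonelli's theorem this has probability at most a constant times the variance
(`prob_zero_le`).
-/

open MeasureTheory ProbabilityTheory

/-- The value `±1` of a Boolean spin. -/
noncomputable def spin (b : Bool) : ℝ := if b then 1 else -1

/-- The magnetization `⟨σ, 1⟩ = Σ_i σ_i` of a spin configuration. -/
noncomputable def mag {n : ℕ} (σ : Fin n → Bool) : ℝ := ∑ i, spin (σ i)

/-- Index set for the Gaussian disorder. -/
abbrev SpinIdx (pmax n : ℕ) := Σ p : Fin (pmax + 1), (Fin (p : ℕ) → Fin n)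

/-- The disorder distribution: i.i.d. standard Gaussians over all index tuples. -/
noncomputable def disorder (pmax n : ℕ) : Measure ((SpinIdx pmax n) → ℝ) :=
  Measure.pi fun _ => gaussianReal 0 1

/-- The mixed `p`-spin Hamiltonian. -/
noncomputable def hamiltonian (pmax n : ℕ) (γ : ℕ → ℝ) (G : SpinIdx pmax n → ℝ)
    (σ : Fin n → Bool) : ℝ :=
  ∑ p : Fin (pmax + 1), if 2 ≤ (p : ℕ) then
      γ (p : ℕ) * (n : ℝ) ^ (-((((p : ℕ) : ℝ) - 1) / 2)) *
        ∑ α : Fin (p : ℕ) → Fin n, G ⟨p, α⟩ * ∏ j, spin (σ (α j))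
    else 0

/-- The mixture function `ξ(s) = Σ_{p=2}^{p_max} γ_p² s^p`. -/
noncomputable def mix (pmax : ℕ) (γ : ℕ → ℝ) (s : ℝ) : ℝ :=
  ∑ p ∈ Finset.Icc 2 pmax, γ p ^ 2 * s ^ p

/-- The (complex) partition function `Z_G(β) = 2^{-n} Σ_σ exp(β H_G(σ))`. -/
noncomputable def Zpart (pmax n : ℕ) (γ : ℕ → ℝ) (G : SpinIdx pmax n → ℝ) (β : ℂ) : ℂ :=
  (2 : ℂ) ^ (-(n : ℤ)) * ∑ σ : Fin n → Bool,
    Complex.exp (β * (hamiltonian pmax n γ G σ : ℂ))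

/-- The entropy function
`h(m) = -(1/2)((1-m)log(1-m) + (1+m)log(1+m))` (with `0·log 0 = 0`). -/
noncomputable def entH (m : ℝ) : ℝ :=
  -(1 / 2) * ((1 - m) * Real.log (1 - m) + (1 + m) * Real.log (1 + m))

/-- The second moment threshold
`β_2nd = sup{β ≥ 0 : 2β²γ₂² < 1 and β²ξ(m) + h(m) < 0 for all m ∈ [−1,1]∖{0}}`. -/
noncomputable def beta2nd (pmax : ℕ) (γ : ℕ → ℝ) : ℝ :=
  sSup {β : ℝ | 0 ≤ β ∧ 2 * β ^ 2 * γ 2 ^ 2 < 1 ∧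
    ∀ m ∈ Set.Icc (-1 : ℝ) 1, m ≠ 0 → β ^ 2 * mix pmax γ m + entH m < 0}


/-! ### Gaussian second moments -/

/-- The Laplace transform of a product of standard Gaussians, at a complex argument. -/
lemma gauss_exp {ι : Type*} [Fintype ι] (a : ι → ℂ) :
    Integrable (fun G : ι → ℝ => Complex.exp (∑ i, a i * G i))
      (Measure.pi fun _ => gaussianReal 0 1) ∧
    ∫ G : ι → ℝ, Complex.exp (∑ i, a i * G i) ∂(Measure.pi fun _ => gaussianReal 0 1)
      = Complex.exp (∑ i, a i ^ 2 / 2) := by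
  simp only [Complex.exp_sum]
  constructor
  · refine Integrable.fintype_prod (f := fun i (x : ℝ) => Complex.exp (a i * x)) fun i => ?_
    exact integrable_cexp_mul_of_re_mem_integrableExpSet (X := id) aemeasurable_id
      (by simp [integrableExpSet_id_gaussianReal])
  · rw [integral_fintype_prod_eq_prod (fun i (x : ℝ) => Complex.exp (a i * x))]
    refine Finset.prod_congr rfl fun i _ => ?_
    have := complexMGF_id_gaussianReal (μ := 0) (v := 1) (a i)
    simpa [complexMGF] using this

/-- The coefficient of the Gaussian of index `i` in the Hamiltonian at `σ`. -/
noncomputable def coef (pmax n : ℕ) (γ : ℕ → ℝ) (σ : Fin n → Bool) (i : SpinIdx pmax n) : ℝ :=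
  if 2 ≤ (i.1 : ℕ) then
    γ (i.1 : ℕ) * (n : ℝ) ^ (-((((i.1 : ℕ) : ℝ) - 1) / 2)) * ∏ j, spin (σ (i.2 j)) else 0

lemma hamiltonian_eq (pmax n : ℕ) (γ : ℕ → ℝ) (G : SpinIdx pmax n → ℝ) (σ : Fin n → Bool) :
    hamiltonian pmax n γ G σ = ∑ i, coef pmax n γ σ i * G i := by
  rw [Fintype.sum_sigma]
  unfold hamiltonian coef
  refine Finset.sum_congr rfl fun p _ => ?_
  split_ifs with h
  · rw [Finset.mul_sum]
    refine Finset.sum_congr rfl fun α _ => ?_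
    ring
  · simp

/-- The Hamiltonian is a centered Gaussian process with covariance `n ξ(R(σ, τ))`, where `R` is
the overlap of the two configurations. -/
lemma sum_coef_mul (pmax n : ℕ) (hn : 1 ≤ n) (γ : ℕ → ℝ) (σ τ : Fin n → Bool) :
    ∑ i, coef pmax n γ σ i * coef pmax n γ τ i
      = n * mix pmax γ ((∑ i, spin (σ i) * spin (τ i)) / n) := by
  have hn0 : (0 : ℝ) < n := by exact_mod_cast hn
  have hmix : mix pmax γ ((∑ i, spin (σ i) * spin (τ i)) / n) =
      ∑ p : Fin (pmax + 1), if 2 ≤ (p : ℕ) then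
        γ p ^ 2 * ((∑ i, spin (σ i) * spin (τ i)) / n) ^ (p : ℕ) else 0 := by
    rw [Fin.sum_univ_eq_sum_range (fun p => if 2 ≤ p then
      γ p ^ 2 * ((∑ i, spin (σ i) * spin (τ i)) / n) ^ p else 0), ← Finset.sum_filter]
    unfold mix
    refine Finset.sum_congr ?_ fun _ _ => rfl
    ext p
    simp only [Finset.mem_Icc, Finset.mem_filter, Finset.mem_range]
    omega
  rw [hmix, Fintype.sum_sigma, Finset.mul_sum]
  refine Finset.sum_congr rfl fun p _ => ?_
  unfold coef
  split_ifs with h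
  · rw [div_pow, Fintype.sum_pow]
    have hs : ((n : ℝ) ^ (-((((p : ℕ) : ℝ) - 1) / 2))) ^ 2 = n / (n : ℝ) ^ (p : ℕ) := by
      rw [← Real.rpow_natCast, ← Real.rpow_mul hn0.le]
      have : -((((p : ℕ) : ℝ) - 1) / 2) * ((2 : ℕ) : ℝ) = 1 - ((p : ℕ) : ℝ) := by
        push_cast; ring
      rw [this, Real.rpow_sub hn0, Real.rpow_one, Real.rpow_natCast]
    have : (n : ℝ) * (γ p ^ 2 * ((∑ α : Fin (p : ℕ) → Fin n, ∏ j, spin (σ (α j)) * spin (τ (α j)))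
        / (n : ℝ) ^ (p : ℕ))) = γ p ^ 2 * (n / (n : ℝ) ^ (p : ℕ)) *
        ∑ α : Fin (p : ℕ) → Fin n, ∏ j, spin (σ (α j)) * spin (τ (α j)) := by ring
    rw [this, ← hs, Finset.mul_sum]
    refine Finset.sum_congr rfl fun α _ => ?_
    rw [Finset.prod_mul_distrib]
    ring
  · simp

lemma spin_mul_self (b : Bool) : spin b * spin b = 1 := by
  unfold spin; split_ifs <;> norm_num

/-- The contribution of `σ` to the normalized partition function: `exp(βH(σ))` divided by its
expectation. -/
noncomputable def tilt (pmax n : ℕ) (γ : ℕ → ℝ) (β : ℂ) (G : SpinIdx pmax n → ℝ)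
    (σ : Fin n → Bool) : ℂ :=
  Complex.exp (β * (hamiltonian pmax n γ G σ : ℂ) - β ^ 2 * (n * mix pmax γ 1 : ℝ) / 2)

lemma sum_coef_sq (pmax n : ℕ) (hn : 1 ≤ n) (γ : ℕ → ℝ) (σ : Fin n → Bool) :
    ∑ i, coef pmax n γ σ i ^ 2 = n * mix pmax γ 1 := by
  have hn0 : (n : ℝ) ≠ 0 := by positivity
  have := sum_coef_mul pmax n hn γ σ σ
  simp only [spin_mul_self, Finset.sum_const, Finset.card_univ, Fintype.card_fin, nsmul_eq_mul,
    mul_one, div_self hn0] at this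
  rw [← this]
  exact Finset.sum_congr rfl fun i _ => pow_two _

lemma tilt_expect (pmax n : ℕ) (hn : 1 ≤ n) (γ : ℕ → ℝ) (β : ℂ) (σ : Fin n → Bool) :
    Integrable (fun G => tilt pmax n γ β G σ) (disorder pmax n) ∧
    ∫ G, tilt pmax n γ β G σ ∂(disorder pmax n) = 1 := by
  obtain ⟨h1, h2⟩ := gauss_exp (fun i => β * (coef pmax n γ σ i : ℂ))
  have key : ∀ G, tilt pmax n γ β G σ = Complex.exp (-(β ^ 2 * (n * mix pmax γ 1 : ℝ) / 2)) *
      Complex.exp (∑ i, β * (coef pmax n γ σ i : ℂ) * G i) := by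
    intro G
    rw [← Complex.exp_add, tilt, hamiltonian_eq]
    push_cast
    rw [Finset.mul_sum]
    simp only [mul_assoc]
    ring_nf
  simp only [key]
  refine ⟨h1.const_mul _, ?_⟩
  rw [integral_const_mul]
  unfold disorder
  rw [h2, ← Complex.exp_add, ← sum_coef_sq pmax n hn γ σ]
  push_cast
  rw [Finset.mul_sum, Finset.sum_div, neg_add_eq_zero.mpr, Complex.exp_zero]
  refine Finset.sum_congr rfl fun i _ => ?_
  ring

lemma tilt_expect_mul (pmax n : ℕ) (hn : 1 ≤ n) (γ : ℕ → ℝ) (β : ℂ) (σ τ : Fin n → Bool) :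
    Integrable (fun G => tilt pmax n γ β G σ * tilt pmax n γ (starRingEnd ℂ β) G τ)
      (disorder pmax n) ∧
    ∫ G, tilt pmax n γ β G σ * tilt pmax n γ (starRingEnd ℂ β) G τ ∂(disorder pmax n) =
      (Real.exp (‖β‖ ^ 2 * (n * mix pmax γ ((∑ i, spin (σ i) * spin (τ i)) / n))) : ℝ) := by
  obtain ⟨h1, h2⟩ := gauss_exp (fun i => β * (coef pmax n γ σ i : ℂ) +
    starRingEnd ℂ β * (coef pmax n γ τ i : ℂ))
  have key : ∀ G, tilt pmax n γ β G σ * tilt pmax n γ (starRingEnd ℂ β) G τ =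
      Complex.exp (-((β ^ 2 + starRingEnd ℂ β ^ 2) * (n * mix pmax γ 1 : ℝ) / 2)) *
      Complex.exp (∑ i, (β * (coef pmax n γ σ i : ℂ) +
        starRingEnd ℂ β * (coef pmax n γ τ i : ℂ)) * G i) := by
    intro G
    rw [tilt, tilt, ← Complex.exp_add, ← Complex.exp_add, hamiltonian_eq, hamiltonian_eq]
    push_cast
    rw [Finset.mul_sum, Finset.mul_sum]
    simp only [add_mul, Finset.sum_add_distrib, mul_assoc]
    ring_nf
  simp only [key]
  refine ⟨h1.const_mul _, ?_⟩
  rw [integral_const_mul]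
  unfold disorder
  rw [h2, ← Complex.exp_add, ← sum_coef_mul pmax n hn γ σ τ]
  have hsum : ∑ i, (β * (coef pmax n γ σ i : ℂ) +
      starRingEnd ℂ β * (coef pmax n γ τ i : ℂ)) ^ 2 / 2 =
      β ^ 2 / 2 * ((∑ i, coef pmax n γ σ i ^ 2 : ℝ) : ℂ) +
      starRingEnd ℂ β ^ 2 / 2 * ((∑ i, coef pmax n γ τ i ^ 2 : ℝ) : ℂ) +
      (β * starRingEnd ℂ β) * ((∑ i, coef pmax n γ σ i * coef pmax n γ τ i : ℝ) : ℂ) := by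
    push_cast
    rw [Finset.mul_sum, Finset.mul_sum, Finset.mul_sum, ← Finset.sum_add_distrib,
      ← Finset.sum_add_distrib]
    refine Finset.sum_congr rfl fun i _ => ?_
    ring
  rw [hsum, sum_coef_sq pmax n hn, sum_coef_sq pmax n hn, Complex.mul_conj',
    Complex.ofReal_exp]
  congr 1
  push_cast
  ring

/-- The deviation of the normalized partition function `Z_G(β) / E Z_G(β)` from its mean `1`. -/
noncomputable def dev (pmax n : ℕ) (γ : ℕ → ℝ) (β : ℂ) (G : SpinIdx pmax n → ℝ) : ℂ :=
  ((2 : ℂ) ^ n)⁻¹ * ∑ σ : Fin n → Bool, (tilt pmax n γ β G σ - 1)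

lemma tilt_conj (pmax n : ℕ) (γ : ℕ → ℝ) (β : ℂ) (G : SpinIdx pmax n → ℝ) (σ : Fin n → Bool) :
    starRingEnd ℂ (tilt pmax n γ β G σ) = tilt pmax n γ (starRingEnd ℂ β) G σ := by
  unfold tilt
  rw [← Complex.exp_conj]
  simp [Complex.conj_ofNat]

lemma dev_of_zero (pmax n : ℕ) (γ : ℕ → ℝ) (β : ℂ) (G : SpinIdx pmax n → ℝ)
    (h : Zpart pmax n γ G β = 0) : dev pmax n γ β G = -1 := by
  have h2 : (2 : ℂ) ^ (-(n : ℤ)) ≠ 0 := zpow_ne_zero _ two_ne_zero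
  have h0 : ∑ σ : Fin n → Bool, Complex.exp (β * (hamiltonian pmax n γ G σ : ℂ)) = 0 :=
    (mul_eq_zero.mp h).resolve_left h2
  unfold dev tilt
  simp only [Complex.exp_sub]
  rw [Finset.sum_sub_distrib, ← Finset.sum_div, h0]
  simp

/-- Multiplication by a fixed configuration permutes the hypercube, so the overlap with `σ` is
distributed as the magnetization. -/
lemma sum_overlap (n : ℕ) (σ : Fin n → Bool) (f : ℝ → ℝ) :
    ∑ τ : Fin n → Bool, f (∑ i, spin (σ i) * spin (τ i)) = ∑ τ : Fin n → Bool, f (mag τ) := by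
  have hinv : Function.Involutive (fun (τ : Fin n → Bool) i => (σ i == τ i)) := by
    intro τ
    funext i
    cases h : σ i <;> cases h' : τ i <;> simp [h, h']
  refine Fintype.sum_equiv hinv.toPerm _ _ fun τ => ?_
  congr 1
  unfold mag
  refine Finset.sum_congr rfl fun i _ => ?_
  change _ = spin (σ i == τ i)
  cases σ i <;> cases τ i <;> simp [spin]

/-- The variance of the normalized partition function at `β`. It depends only on `‖β‖`: the
phases cancel in `E[exp(βH(σ)) exp(β̄H(τ))]` after division by the means. -/
lemma dev_second_moment (pmax n : ℕ) (hn : 1 ≤ n) (γ : ℕ → ℝ) (β : ℂ) :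
    Integrable (fun G => ‖dev pmax n γ β G‖ ^ 2) (disorder pmax n) ∧
    ∫ G, ‖dev pmax n γ β G‖ ^ 2 ∂(disorder pmax n) =
      ((2 : ℝ) ^ n)⁻¹ * ∑ τ : Fin n → Bool,
        (Real.exp (‖β‖ ^ 2 * (n * mix pmax γ (mag τ / n))) - 1) := by
  have : IsProbabilityMeasure (disorder pmax n) := by unfold disorder; infer_instance
  have key : ∀ G, ((‖dev pmax n γ β G‖ ^ 2 : ℝ) : ℂ) =
      (((2 : ℂ) ^ n)⁻¹) ^ 2 * ∑ σ : Fin n → Bool, ∑ τ : Fin n → Bool,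
        (tilt pmax n γ β G σ * tilt pmax n γ (starRingEnd ℂ β) G τ - tilt pmax n γ β G σ
          - tilt pmax n γ (starRingEnd ℂ β) G τ + 1) := by
    intro G
    rw [Complex.ofReal_pow, ← Complex.mul_conj']
    unfold dev
    simp only [map_mul, map_sum, map_sub, map_one, tilt_conj, map_inv₀, map_pow, Complex.conj_ofNat]
    rw [mul_mul_mul_comm, Finset.sum_mul_sum, ← pow_two]
    congr 1
    refine Finset.sum_congr rfl fun σ _ => Finset.sum_congr rfl fun τ _ => ?_
    ring
  have hint : ∀ σ τ : Fin n → Bool, Integrable (fun G =>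
      tilt pmax n γ β G σ * tilt pmax n γ (starRingEnd ℂ β) G τ - tilt pmax n γ β G σ
          - tilt pmax n γ (starRingEnd ℂ β) G τ + 1) (disorder pmax n) := fun σ τ =>
    (((tilt_expect_mul pmax n hn γ β σ τ).1.sub (tilt_expect pmax n hn γ β σ).1).sub
      (tilt_expect pmax n hn γ _ τ).1).add (integrable_const _)
  have hval : ∀ σ τ : Fin n → Bool, ∫ G, (
      tilt pmax n γ β G σ * tilt pmax n γ (starRingEnd ℂ β) G τ - tilt pmax n γ β G σ
          - tilt pmax n γ (starRingEnd ℂ β) G τ + 1) ∂(disorder pmax n) =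
      ((Real.exp (‖β‖ ^ 2 * (n * mix pmax γ ((∑ i, spin (σ i) * spin (τ i)) / n))) - 1 : ℝ) : ℂ)
      := by
    intro σ τ
    have i1 := (tilt_expect_mul pmax n hn γ β σ τ)
    have i2 := (tilt_expect pmax n hn γ β σ)
    have i3 := (tilt_expect pmax n hn γ (starRingEnd ℂ β) τ)
    have j1 := i1.1.sub i2.1
    have j2 := j1.sub i3.1
    rw [integral_add, integral_sub, integral_sub, i1.2, i2.2, i3.2]
    · simp
    exacts [i1.1, i2.1, j1, i3.1, j2, integrable_const _]
  have hI : Integrable (fun G => ((‖dev pmax n γ β G‖ ^ 2 : ℝ) : ℂ)) (disorder pmax n) := by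
    simp only [key]
    exact (integrable_finsetSum _ fun σ _ => integrable_finsetSum _ fun τ _ => hint σ τ).const_mul _
  refine ⟨by simpa only [RCLike.re_eq_complex_re, Complex.ofReal_re] using hI.re, ?_⟩
  have : ((∫ G, ‖dev pmax n γ β G‖ ^ 2 ∂(disorder pmax n) : ℝ) : ℂ) =
      ((((2 : ℝ) ^ n)⁻¹ * ∑ τ : Fin n → Bool,
        (Real.exp (‖β‖ ^ 2 * (n * mix pmax γ (mag τ / n))) - 1) : ℝ) : ℂ) := by
    rw [← integral_complex_ofReal]
    simp only [key]
    rw [integral_const_mul, integral_finsetSum _ fun σ _ =>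
      integrable_finsetSum _ fun τ _ => hint σ τ]
    simp_rw [integral_finsetSum _ fun τ _ => hint _ τ, hval, ← Complex.ofReal_sum]
    simp_rw [fun σ => sum_overlap n σ
      (fun x => Real.exp (‖β‖ ^ 2 * (n * mix pmax γ (x / n))) - 1)]
    simp only [Finset.sum_const, Finset.card_univ, Fintype.card_fun, Fintype.card_bool,
      Fintype.card_fin, nsmul_eq_mul]
    push_cast
    field_simp
  exact_mod_cast this

/-! ### Entropy and the hypercube average -/

lemma entH_le {m : ℝ} (hm : m ∈ Set.Icc (-1 : ℝ) 1) : entH m ≤ -(m ^ 2 / 4) := by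
  -- `log y = 2 log √y ≥ 2 (1 - 1/√y)`
  have key : ∀ y : ℝ, 0 ≤ y → 2 * (y - √y) ≤ y * Real.log y := by
    intro y hy
    rcases hy.eq_or_lt with rfl | hy
    · simp
    have hs : 0 < √y := Real.sqrt_pos.mpr hy
    have h1 := Real.one_sub_inv_le_log_of_pos hs
    rw [Real.log_sqrt hy.le] at h1
    have h2 : y * (√y)⁻¹ = √y := by
      rw [← div_eq_mul_inv, Real.div_sqrt]
    nlinarith [mul_le_mul_of_nonneg_left h1 hy.le]
  have h1 := key (1 - m) (by linarith [hm.2])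
  have h2 := key (1 + m) (by linarith [hm.1])
  have s1 := Real.sq_sqrt (show 0 ≤ 1 - m by linarith [hm.2])
  have s2 := Real.sq_sqrt (show 0 ≤ 1 + m by linarith [hm.1])
  have p1 := Real.sqrt_nonneg (1 - m)
  have p2 := Real.sqrt_nonneg (1 + m)
  have h3 : √(1 - m) + √(1 + m) ≤ 2 - m ^ 2 / 4 := by
    have hm2 : m ^ 2 ≤ 1 := by nlinarith [hm.1, hm.2]
    have hp : √(1 - m) * √(1 + m) ≤ 1 - m ^ 2 / 2 := by
      refine abs_le_of_sq_le_sq' ?_ (by linarith) |>.2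
      rw [mul_pow, s1, s2]
      nlinarith [sq_nonneg (m ^ 2)]
    refine abs_le_of_sq_le_sq' ?_ (by linarith) |>.2
    nlinarith [sq_nonneg (m ^ 2)]
  unfold entH
  linarith

lemma spin_sq_or (b : Bool) : spin b = 1 ∨ spin b = -1 := by
  unfold spin; split_ifs <;> simp

lemma abs_mag_le {n : ℕ} (τ : Fin n → Bool) : |mag τ| ≤ n := by
  unfold mag
  refine (Finset.abs_sum_le_sum_abs _ _).trans ?_
  have : ∀ i, |spin (τ i)| = 1 := fun i => by
    rcases spin_sq_or (τ i) with h | h <;> simp [h]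
  simp [this]

lemma mag_div_mem {n : ℕ} (τ : Fin n → Bool) : mag τ / n ∈ Set.Icc (-1 : ℝ) 1 := by
  rw [Set.mem_Icc, ← abs_le, abs_div, Nat.abs_cast]
  exact div_le_one_of_le₀ (abs_mag_le τ) (Nat.cast_nonneg n)

/-- A configuration of magnetization `nm` has likelihood `2^{-n} exp(-n h(m))` under the product
of `±1` spins of mean `m`. -/
lemma exp_entH_eq {n : ℕ} (hn : 1 ≤ n) (τ : Fin n → Bool) :
    Real.exp (-(n * entH (mag τ / n))) = ∏ i, (1 + mag τ / n * spin (τ i)) := by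
  have hn0 : (0 : ℝ) < n := by exact_mod_cast hn
  have hmem := mag_div_mem τ
  have hmag : mag τ = n * (mag τ / n) := by field_simp
  set m := mag τ / n with hm
  have hpos : ∀ i, 0 < 1 + m * spin (τ i) := by
    intro i
    by_contra hcon
    -- a vanishing factor forces `m = ± 1`, hence all spins equal to `m`
    have hb : m * spin (τ i) = -1 := by
      rcases spin_sq_or (τ i) with h | h <;> rw [h] at hcon ⊢ <;> linarith [hmem.1, hmem.2]
    have hsum : ∑ j, m * spin (τ j) = n * (m * m) := by
      rw [← Finset.mul_sum]
      change m * mag τ = _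
      rw [hmag]; ring
    have hmm : m * m = 1 := by
      rcases spin_sq_or (τ i) with h | h <;> rw [h] at hb <;> nlinarith
    have hlt : ∑ j, m * spin (τ j) < ∑ j : Fin n, (1 : ℝ) := by
      refine Finset.sum_lt_sum (fun j _ => ?_) ⟨i, Finset.mem_univ _, by linarith⟩
      rcases spin_sq_or (τ j) with h | h <;> rw [h] <;> linarith [hmem.1, hmem.2]
    rw [hsum, hmm] at hlt
    simp at hlt
  rw [← Real.exp_log (Finset.prod_pos fun i _ => hpos i), Real.log_prod fun i _ => (hpos i).ne']
  congr 1
  have hterm : ∀ i, Real.log (1 + m * spin (τ i)) =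
      (Real.log (1 + m) + Real.log (1 - m)) / 2 +
        (Real.log (1 + m) - Real.log (1 - m)) / 2 * spin (τ i) := by
    intro i
    rcases spin_sq_or (τ i) with h | h <;> rw [h]
    · rw [mul_one]; ring
    · rw [mul_neg_one, ← sub_eq_add_neg]; ring
  simp only [hterm]
  rw [Finset.sum_add_distrib, ← Finset.mul_sum]
  change _ = _ + _ * mag τ
  rw [hmag]
  simp only [Finset.sum_const, Finset.card_univ, Fintype.card_fin, nsmul_eq_mul]
  unfold entH
  ring

lemma sum_prod_spin (n : ℕ) (m : ℝ) :
    ∑ τ : Fin n → Bool, ∏ i, (1 + m * spin (τ i)) = 2 ^ n := by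
  have := Fintype.sum_pow (fun b : Bool => 1 + m * spin b) n
  rw [← this]
  congr 1
  simp only [Fintype.sum_bool, spin]
  norm_num
  ring

/-- Each of the `n + 1` magnetization levels contributes at most `2^n`, since it is an event
for a product measure. -/
lemma sum_exp_entH_le {n : ℕ} (hn : 1 ≤ n) :
    ∑ τ : Fin n → Bool, Real.exp (-(n * entH (mag τ / n))) ≤ (n + 1) * 2 ^ n := by
  have hn0 : (0 : ℝ) < n := by exact_mod_cast hn
  let m : ℕ → ℝ := fun k => (2 * k - n) / n
  let K : (Fin n → Bool) → ℕ := fun τ => (Finset.univ.filter fun i => τ i = true).card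
  have hK : ∀ τ, K τ ∈ Finset.range (n + 1) := fun τ => by
    have := Finset.card_le_univ (Finset.univ.filter fun i => τ i = true)
    simp only [Fintype.card_fin] at this
    exact Finset.mem_range.mpr (Nat.lt_succ_of_le this)
  have hmag : ∀ τ, mag τ / n = m (K τ) := fun τ => by
    have hs : ∀ b : Bool, spin b = 2 * (if b = true then 1 else 0) - 1 := by
      intro b; cases b <;> simp [spin]; norm_num
    simp only [m, K, mag, hs, Finset.sum_sub_distrib, ← Finset.mul_sum, Finset.sum_boole]
    simp
  have hm : ∀ k ∈ Finset.range (n + 1), m k ∈ Set.Icc (-1 : ℝ) 1 := fun k hk => by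
    have hk' : (k : ℝ) ≤ n := by exact_mod_cast Nat.lt_succ_iff.mp (Finset.mem_range.mp hk)
    constructor
    · rw [le_div_iff₀ hn0]; linarith [Nat.cast_nonneg (α := ℝ) k]
    · rw [div_le_one hn0]; linarith
  have hnn : ∀ k ∈ Finset.range (n + 1), ∀ τ : Fin n → Bool, 0 ≤ ∏ i, (1 + m k * spin (τ i)) := by
    intro k hk τ
    refine Finset.prod_nonneg fun i _ => ?_
    rcases spin_sq_or (τ i) with h | h <;> rw [h] <;> linarith [(hm k hk).1, (hm k hk).2]
  calc ∑ τ : Fin n → Bool, Real.exp (-(n * entH (mag τ / n)))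
      = ∑ τ : Fin n → Bool, ∏ i, (1 + m (K τ) * spin (τ i)) :=
        Finset.sum_congr rfl fun τ _ => by rw [exp_entH_eq hn, hmag]
    _ ≤ ∑ τ : Fin n → Bool, ∑ k ∈ Finset.range (n + 1), ∏ i, (1 + m k * spin (τ i)) :=
        Finset.sum_le_sum fun τ _ =>
          Finset.single_le_sum (f := fun k => ∏ i, (1 + m k * spin (τ i)))
            (fun k hk => hnn k hk τ) (hK τ)
    _ = (n + 1) * 2 ^ n := by
        rw [Finset.sum_comm]
        simp [sum_prod_spin]

/-- Since `γ₂ = 0`, the mixture function vanishes to third order at the origin. -/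
lemma mix_le (pmax : ℕ) (γ : ℕ → ℝ) (hγ2 : γ 2 = 0) {m : ℝ} (hm : |m| ≤ 1) :
    mix pmax γ m ≤ (∑ p ∈ Finset.Icc 2 pmax, γ p ^ 2) * |m| ^ 3 := by
  unfold mix
  rw [Finset.sum_mul]
  refine Finset.sum_le_sum fun p hp => ?_
  by_cases h : p = 2
  · subst h; simp [hγ2]
  · have h3 : 3 ≤ p := by have := (Finset.mem_Icc.mp hp).1; omega
    refine mul_le_mul_of_nonneg_left ?_ (sq_nonneg _)
    calc m ^ p ≤ |m| ^ p := by rw [← abs_pow]; exact le_abs_self _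
      _ ≤ |m| ^ 3 := pow_le_pow_of_le_one (abs_nonneg _) hm h3

/-- Below the second moment threshold the variance of the normalized partition function is
bounded by a contribution of small magnetizations `|m| ≤ δ`, controlled by the cubic vanishing of
`ξ`, and one of large magnetizations, controlled by the entropy. -/
lemma variance_le (pmax : ℕ) (γ : ℕ → ℝ) (hγ2 : γ 2 = 0) {r s : ℝ} (hr : 0 ≤ r) (hrs : r < s)
    (hs : ∀ m ∈ Set.Icc (-1 : ℝ) 1, m ≠ 0 → s ^ 2 * mix pmax γ m + entH m < 0)
    {n : ℕ} (hn : 1 ≤ n) {δ : ℝ} (hδ : 0 ≤ δ) :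
    ((2 : ℝ) ^ n)⁻¹ * ∑ τ : Fin n → Bool, (Real.exp (r ^ 2 * (n * mix pmax γ (mag τ / n))) - 1) ≤
      (Real.exp (r ^ 2 * (n * ((∑ p ∈ Finset.Icc 2 pmax, γ p ^ 2) * δ ^ 3))) - 1) +
      (n + 1) * Real.exp (-((1 - r ^ 2 / s ^ 2) * (n * (δ ^ 2 / 4)))) := by
  have hn0 : (0 : ℝ) < n := by exact_mod_cast hn
  have hs0 : 0 < s := lt_of_le_of_lt hr hrs
  set C := ∑ p ∈ Finset.Icc 2 pmax, γ p ^ 2 with hC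
  have hC0 : 0 ≤ C := Finset.sum_nonneg fun _ _ => sq_nonneg _
  set θ := r ^ 2 / s ^ 2 with hθ
  have hθ0 : 0 ≤ θ := by positivity
  have hθ1 : θ < 1 := by
    rw [hθ, div_lt_one (by positivity)]
    exact pow_lt_pow_left₀ hrs hr (by norm_num)
  have hrθ : r ^ 2 = θ * s ^ 2 := by rw [hθ]; field_simp
  have hA : 0 ≤ Real.exp (r ^ 2 * (n * (C * δ ^ 3))) - 1 := by
    have : 0 ≤ r ^ 2 * (n * (C * δ ^ 3)) := by positivity
    linarith [Real.add_one_le_exp (r ^ 2 * (n * (C * δ ^ 3)))]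
  set A := Real.exp (r ^ 2 * (n * (C * δ ^ 3))) - 1 with hAdef
  set B := Real.exp (-((1 - θ) * (n * (δ ^ 2 / 4)))) with hB
  have hterm : ∀ τ : Fin n → Bool, Real.exp (r ^ 2 * (n * mix pmax γ (mag τ / n))) - 1 ≤
      A + B * Real.exp (-(n * entH (mag τ / n))) := by
    intro τ
    have hmem := mag_div_mem τ
    set m := mag τ / n with hm
    have habs : |m| ≤ 1 := abs_le.mpr hmem
    by_cases hc : |m| ≤ δ
    · have h1 : mix pmax γ m ≤ C * δ ^ 3 :=
        (mix_le pmax γ hγ2 habs).trans (by gcongr)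
      have h2 : Real.exp (r ^ 2 * (n * mix pmax γ m)) ≤ Real.exp (r ^ 2 * (n * (C * δ ^ 3))) := by
        gcongr
      have : 0 ≤ B * Real.exp (-(n * entH m)) := by positivity
      rw [hAdef]
      linarith
    · push Not at hc
      have hm0 : m ≠ 0 := by
        intro h0; rw [h0, abs_zero] at hc; linarith
      have h1 := hs m hmem hm0
      have h2 := entH_le hmem
      have h3 : δ ^ 2 ≤ m ^ 2 := by rw [← sq_abs m]; gcongr
      have h4 : Real.exp (r ^ 2 * (n * mix pmax γ m)) ≤ B * Real.exp (-(n * entH m)) := by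
        rw [hB, ← Real.exp_add, Real.exp_le_exp, hrθ]
        have e1 : θ * (s ^ 2 * mix pmax γ m) ≤ θ * (-entH m) :=
          mul_le_mul_of_nonneg_left (by linarith) hθ0
        have e2 : (1 - θ) * entH m ≤ (1 - θ) * (-(δ ^ 2 / 4)) :=
          mul_le_mul_of_nonneg_left (by linarith) (by linarith)
        have e3 : n * (θ * (s ^ 2 * mix pmax γ m)) ≤
            n * (-((1 - θ) * (δ ^ 2 / 4)) + -entH m) :=
          mul_le_mul_of_nonneg_left (by linarith) hn0.le
        calc _ = n * (θ * (s ^ 2 * mix pmax γ m)) := by ring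
          _ ≤ _ := e3
          _ = _ := by ring
      linarith
  have h2n : (0 : ℝ) < 2 ^ n := by positivity
  calc _ ≤ ((2 : ℝ) ^ n)⁻¹ * ∑ τ : Fin n → Bool, (A + B * Real.exp (-(n * entH (mag τ / n)))) := by
        gcongr with τ _
        exact hterm τ
    _ = A + ((2 : ℝ) ^ n)⁻¹ * (B * ∑ τ : Fin n → Bool, Real.exp (-(n * entH (mag τ / n)))) := by
        rw [Finset.sum_add_distrib, ← Finset.mul_sum, mul_add]
        simp only [Finset.sum_const, Finset.card_univ, Fintype.card_fun, Fintype.card_bool,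
          Fintype.card_fin, nsmul_eq_mul]
        push_cast
        field_simp
    _ ≤ A + ((2 : ℝ) ^ n)⁻¹ * (B * ((n + 1) * 2 ^ n)) := by
        gcongr
        exact sum_exp_entH_le hn
    _ = A + (n + 1) * B := by field_simp

open Filter in
/-- At the scale `δ = n^{-2/5}` both contributions of `variance_le` vanish, because
`n δ³ → 0` while `n δ²` grows polynomially. -/
lemma variance_bound_tendsto (c C : ℝ) (hc : 0 < c) :
    Tendsto (fun n : ℕ => (Real.exp (C * (n * ((n : ℝ) ^ (-(2 / 5 : ℝ))) ^ 3)) - 1) +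
      (n + 1) * Real.exp (-(c * (n * (((n : ℝ) ^ (-(2 / 5 : ℝ))) ^ 2 / 4))))) atTop (nhds 0) := by
  have hcast := tendsto_natCast_atTop_atTop (R := ℝ)
  have e1 : ∀ᶠ n : ℕ in atTop, (n : ℝ) ^ (-(1 / 5 : ℝ)) = n * ((n : ℝ) ^ (-(2 / 5 : ℝ))) ^ 3 := by
    filter_upwards [eventually_ge_atTop 1] with n hn
    have hn0 : (0 : ℝ) < n := by exact_mod_cast hn
    rw [← Real.rpow_natCast, ← Real.rpow_mul hn0.le, ← Real.rpow_one_add' hn0.le (by norm_num)]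
    norm_num
  have e2 : ∀ᶠ n : ℕ in atTop, (n : ℝ) ^ (1 / 5 : ℝ) = n * ((n : ℝ) ^ (-(2 / 5 : ℝ))) ^ 2 := by
    filter_upwards [eventually_ge_atTop 1] with n hn
    have hn0 : (0 : ℝ) < n := by exact_mod_cast hn
    rw [← Real.rpow_natCast, ← Real.rpow_mul hn0.le, ← Real.rpow_one_add' hn0.le (by norm_num)]
    norm_num
  have t1 : Tendsto (fun n : ℕ => Real.exp (C * (n : ℝ) ^ (-(1 / 5 : ℝ))) - 1) atTop (nhds 0) := by
    have h := (tendsto_rpow_neg_atTop (show (0 : ℝ) < 1 / 5 by norm_num)).comp hcast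
    have h' := ((Real.continuous_exp.tendsto _).comp (h.const_mul C)).sub_const 1
    simpa using h'
  have t2 : Tendsto (fun n : ℕ => ((n : ℝ) + 1) * Real.exp (-(c / 4) * (n : ℝ) ^ (1 / 5 : ℝ)))
      atTop (nhds 0) := by
    have hx : Tendsto (fun n : ℕ => (n : ℝ) ^ (1 / 5 : ℝ)) atTop atTop :=
      (tendsto_rpow_atTop (by norm_num)).comp hcast
    have h5 := (tendsto_rpow_mul_exp_neg_mul_atTop_nhds_zero 5 (c / 4) (by positivity)).comp hx
    have h0 := (tendsto_rpow_mul_exp_neg_mul_atTop_nhds_zero 0 (c / 4) (by positivity)).comp hx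
    have h := h5.add h0
    rw [add_zero] at h
    refine h.congr fun n => ?_
    have hn0 : (0 : ℝ) ≤ n := Nat.cast_nonneg n
    simp only [Function.comp, Real.rpow_zero]
    rw [← Real.rpow_mul hn0]
    norm_num
    ring
  have := t1.add t2
  rw [add_zero] at this
  refine this.congr' ?_
  filter_upwards [e1, e2] with n h1 h2
  rw [← h1, h2]
  congr 3
  ring

/-! ### From the second moment to the absence of zeros -/

/-- Cauchy's formula bounds an entire function in a disk by its mean on a larger circle. -/
lemma circle_bound {f : ℂ → ℂ} (hf : Differentiable ℂ f) {ρ r : ℝ} (hr : 0 < r) (hρr : ρ < r)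
    {w : ℂ} (hw : ‖w‖ < ρ) :
    ENNReal.ofReal (2 * Real.pi * ‖f w‖ * ((r - ρ) / r)) ≤
      ∫⁻ θ in Set.Ioc 0 (2 * Real.pi), ENNReal.ofReal ‖f (circleMap 0 r θ)‖ := by
  have hcont : Continuous fun θ => ‖f (circleMap 0 r θ)‖ :=
    (hf.continuous.comp (continuous_circleMap 0 r)).norm
  have hpi : (0 : ℝ) ≤ 2 * Real.pi := by positivity
  rw [← ofReal_integral_eq_lintegral_ofReal
    (hcont.integrableOn_Icc.mono_set Set.Ioc_subset_Icc_self) (by filter_upwards; simp)]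
  refine ENNReal.ofReal_le_ofReal ?_
  rw [← intervalIntegral.integral_of_le hpi]
  have hC := hf.diffContOnCl.circleIntegral_sub_inv_smul (R := r) (c := 0) (w := w)
    (by simpa using hw.trans hρr)
  have hn : 2 * Real.pi * ‖f w‖ = ‖∮ z in C(0, r), (z - w)⁻¹ • f z‖ := by
    rw [hC, norm_smul]
    simp [abs_of_pos Real.pi_pos]
  have hle : ‖∮ z in C(0, r), (z - w)⁻¹ • f z‖ ≤
      ∫ θ in (0 : ℝ)..2 * Real.pi, r / (r - ρ) * ‖f (circleMap 0 r θ)‖ := by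
    refine intervalIntegral.norm_integral_le_of_norm_le hpi ?_
      ((hcont.const_mul _).intervalIntegrable _ _)
    filter_upwards with θ _
    rw [deriv_circleMap, norm_smul, norm_smul, norm_inv, norm_mul, norm_circleMap_zero,
      Complex.norm_I, mul_one, abs_of_pos hr, ← mul_assoc, ← div_eq_mul_inv]
    have h1 : r - ρ ≤ ‖circleMap 0 r θ - w‖ := by
      have := norm_sub_norm_le (circleMap 0 r θ) w
      rw [norm_circleMap_zero, abs_of_pos hr] at this
      linarith
    have h2 : 0 < r - ρ := by linarith
    gcongr
  rw [intervalIntegral.integral_const_mul, ← hn] at hle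
  have h2 : 0 < r - ρ := by linarith
  calc _ ≤ (r / (r - ρ) * ∫ θ in (0 : ℝ)..2 * Real.pi, ‖f (circleMap 0 r θ)‖) * ((r - ρ) / r) := by
        gcongr
    _ = _ := by field_simp

lemma dev_continuous (pmax n : ℕ) (γ : ℕ → ℝ) :
    Continuous fun x : ℂ × (SpinIdx pmax n → ℝ) => dev pmax n γ x.1 x.2 := by
  unfold dev tilt
  simp only [hamiltonian_eq]
  fun_prop

lemma dev_differentiable (pmax n : ℕ) (γ : ℕ → ℝ) (G : SpinIdx pmax n → ℝ) :
    Differentiable ℂ fun β => dev pmax n γ β G := by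
  unfold dev tilt
  fun_prop

/-- Markov's inequality for the circle mean of `|dev|²`, which is large whenever the partition
function has a zero in the disk of radius `ρ`. -/
lemma prob_zero_le (pmax n : ℕ) (hn : 1 ≤ n) (γ : ℕ → ℝ) {ρ r : ℝ} (hr : 0 < r) (hρr : ρ < r) :
    disorder pmax n {G | ∃ β ∈ Metric.ball (0 : ℂ) ρ, Zpart pmax n γ G β = 0} ≤
      ENNReal.ofReal (r / (r - ρ) * (((2 : ℝ) ^ n)⁻¹ * ∑ τ : Fin n → Bool,
        (Real.exp (r ^ 2 * (n * mix pmax γ (mag τ / n))) - 1))) := by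
  have : IsProbabilityMeasure (disorder pmax n) := by unfold disorder; infer_instance
  set V := ((2 : ℝ) ^ n)⁻¹ * ∑ τ : Fin n → Bool,
        (Real.exp (r ^ 2 * (n * mix pmax γ (mag τ / n))) - 1) with hV
  have h2 : 0 < r - ρ := by linarith
  have hc : 0 < 2 * Real.pi * ((r - ρ) / r) := by positivity
  have hm : Measurable (Function.uncurry fun (G : SpinIdx pmax n → ℝ) (θ : ℝ) =>
      ENNReal.ofReal (‖dev pmax n γ (circleMap 0 r θ) G‖ ^ 2)) := by
    refine ENNReal.measurable_ofReal.comp (Continuous.measurable ?_)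
    exact ((dev_continuous pmax n γ).comp
      (((continuous_circleMap 0 r).comp continuous_snd).prodMk continuous_fst)).norm.pow 2
  have hsub : {G | ∃ β ∈ Metric.ball (0 : ℂ) ρ, Zpart pmax n γ G β = 0} ⊆
      {G | ENNReal.ofReal (2 * Real.pi * ((r - ρ) / r)) ≤
        ∫⁻ θ in Set.Ioc 0 (2 * Real.pi),
          ENNReal.ofReal (‖dev pmax n γ (circleMap 0 r θ) G‖ ^ 2)} := by
    rintro G ⟨β, hβ, hZ⟩
    have := circle_bound (f := fun β => dev pmax n γ β G ^ 2)
      ((dev_differentiable pmax n γ G).pow 2) hr hρr (w := β) (by simpa using hβ)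
    simp only [norm_pow] at this
    rw [dev_of_zero pmax n γ β G hZ] at this
    simpa using this
  refine (measure_mono hsub).trans ((meas_ge_le_lintegral_div
    hm.lintegral_prod_right.aemeasurable (by simpa using hc) ENNReal.ofReal_ne_top).trans ?_)
  rw [lintegral_lintegral_swap hm.aemeasurable]
  have hin : ∀ θ : ℝ, ∫⁻ G, ENNReal.ofReal (‖dev pmax n γ (circleMap 0 r θ) G‖ ^ 2)
      ∂(disorder pmax n) = ENNReal.ofReal V := by
    intro θ
    obtain ⟨i1, i2⟩ := dev_second_moment pmax n hn γ (circleMap 0 r θ)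
    rw [← ofReal_integral_eq_lintegral_ofReal i1 (by filter_upwards; intro; positivity), i2,
      norm_circleMap_zero, sq_abs]
  simp only [hin]
  rw [lintegral_const, Measure.restrict_apply_univ, Real.volume_Ioc, sub_zero,
    ← ENNReal.ofReal_mul' (by positivity), ← ENNReal.ofReal_div_of_pos hc]
  refine ENNReal.ofReal_le_ofReal (le_of_eq ?_)
  field_simp

open Filter in
/-- Assume `γ₂ = 0`. For every `ε ∈ (0,1)`, the probability that `Z_G`
has a zero in `D(0, (1−ε)·β_2nd)` tends to `0` as `n → ∞`. -/
theorem zeros_gamma2_eq_zero (pmax : ℕ) (hpmax : 3 ≤ pmax)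
    (γ : ℕ → ℝ) (hγ : ∀ p, 0 ≤ γ p) (hγ2 : γ 2 = 0)
    (hne : ∃ p ∈ Finset.Icc 2 pmax, γ p ≠ 0)
    (ε : ℝ) (hε : ε ∈ Set.Ioo (0 : ℝ) 1) :
    Tendsto (fun n : ℕ => disorder pmax n
        {G | ∃ β ∈ Metric.ball (0 : ℂ) ((1 - ε) * beta2nd pmax γ),
          Zpart pmax n γ G β = 0})
      atTop (nhds 0) := by
  set b := beta2nd pmax γ with hb
  rcases le_or_gt b 0 with hb0 | hb0
  · -- the disk is empty
    have : ∀ n, disorder pmax n {G | ∃ β ∈ Metric.ball (0 : ℂ) ((1 - ε) * b),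
        Zpart pmax n γ G β = 0} = 0 := by
      intro n
      rw [Metric.ball_eq_empty.mpr (by nlinarith [hε.2])]
      simp
    simp only [this]
    exact tendsto_const_nhds
  have hne' : {β : ℝ | 0 ≤ β ∧ 2 * β ^ 2 * γ 2 ^ 2 < 1 ∧
      ∀ m ∈ Set.Icc (-1 : ℝ) 1, m ≠ 0 → β ^ 2 * mix pmax γ m + entH m < 0}.Nonempty := by
    by_contra h
    rw [Set.not_nonempty_iff_eq_empty] at h
    rw [hb, beta2nd, h, Real.sSup_empty] at hb0
    exact lt_irrefl _ hb0
  set r := (1 - ε / 2) * b with hr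
  have hr0 : 0 < r := by have := hε.2; exact mul_pos (by linarith) hb0
  have hρr : (1 - ε) * b < r := by have := hε.1; exact mul_lt_mul_of_pos_right (by linarith) hb0
  have hrb : r < b := by have := hε.1; rw [hr]; nlinarith
  obtain ⟨s, ⟨-, -, hs⟩, hrs⟩ := exists_lt_of_lt_csSup hne' hrb
  have hθ : 0 < 1 - r ^ 2 / s ^ 2 := by
    have hs0 : 0 < s := hr0.trans hrs
    rw [sub_pos, div_lt_one (by positivity)]
    exact pow_lt_pow_left₀ hrs hr0.le (by norm_num)
  have hlim := (variance_bound_tendsto (1 - r ^ 2 / s ^ 2)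
    (r ^ 2 * ∑ p ∈ Finset.Icc 2 pmax, γ p ^ 2) hθ).const_mul (r / (r - (1 - ε) * b))
  rw [mul_zero] at hlim
  have hlim' := (ENNReal.continuous_ofReal.tendsto 0).comp hlim
  rw [ENNReal.ofReal_zero] at hlim'
  refine tendsto_of_tendsto_of_tendsto_of_le_of_le' tendsto_const_nhds hlim'
    (Eventually.of_forall fun _ => zero_le) ?_
  filter_upwards [eventually_ge_atTop 1] with n hn
  refine (prob_zero_le pmax n hn γ hr0 hρr).trans (ENNReal.ofReal_le_ofReal ?_)
  have hq : 0 ≤ r / (r - (1 - ε) * b) := div_nonneg hr0.le (by linarith)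
  refine mul_le_mul_of_nonneg_left ?_ hq
  refine (variance_le pmax γ hγ2 hr0.le hrs hs hn
    (δ := (n : ℝ) ^ (-(2 / 5 : ℝ))) (by positivity)).trans (le_of_eq ?_)
  congr 3
  ring
end

section
/- Let R > 0, let g be analytic on an open set containing the closed disk of radius R centered at 0, with g(0) = 0, and suppose Re g(z) ≤ log L for all |z| ≤ R, where L > 1. Then for every r ∈ (0,R) there exists a constant C > 0 depending only on r/R such that: for every η ∈ (0,1), every integer m ≥ C·log((π + log L)/η), and every z with |z| < r, one has | g(z) − Σ_{k=0}^{m} (g^{(k)}(0)/k!)·z^k | ≤ η. -/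
/-!
Put `M = log L`. The Borel–Carathéodory theorem turns the one-sided bound `Re g ≤ M` into
`‖g‖ ≤ A * M`, with `A = 2σ / (1 - σ)`, on the circle of radius `σ * R`, for any `σ` with `ρ < σ < 1`; here `σ` is
the midpoint `(1 + ρ) / 2`. Cauchy's estimates on that circle bound the `k`-th Taylor term at
`‖z‖ < ρ * R` by `A * M * q ^ k` with `q = ρ / σ < 1`, so the remainder after degree `m` is at most
`B * M * q ^ m` with `B = A / (1 - q)`. Both `B` and `q` depend on `ρ` only.

For the choice of `m`: `X = (π + M) / η` satisfies `log X ≥ 1` because `π > e`, hence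
`log B + log X ≤ (1 + |log B|) * log X`, and `C = (1 + |log B|) / (-log q)` gives
`q ^ m ≤ 1 / (B * X)`, making the remainder at most `M / X ≤ η`.
-/

/-- Remainder of a Taylor series whose terms on `‖z‖ ≤ ρ * R` are controlled by Cauchy's estimates
on the larger circle of radius `σ * R`, where `‖g‖ ≤ K`. -/
lemma norm_sub_taylor_le {ρ σ R K : ℝ} {g : ℂ → ℂ} (hρ : 0 < ρ) (hρσ : ρ < σ) (hR : 0 < R)
    (hg : DifferentiableOn ℂ g (Metric.closedBall 0 (σ * R)))
    (hK : ∀ w ∈ Metric.sphere (0 : ℂ) (σ * R), ‖g w‖ ≤ K) (m : ℕ) {z : ℂ} (hz : ‖z‖ ≤ ρ * R) :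
    ‖g z - ∑ k ∈ Finset.range (m + 1),
        (iteratedDeriv k g 0 / (Nat.factorial k : ℂ)) * z ^ k‖
      ≤ K * (ρ / σ) ^ (m + 1) * (1 - ρ / σ)⁻¹ := by
  have hσ : 0 < σ := hρ.trans hρσ
  have hσR : 0 < σ * R := by positivity
  have hq1 : ρ / σ < 1 := (div_lt_one hσ).2 hρσ
  have hzball : z ∈ Metric.ball (0 : ℂ) (σ * R) := by
    rw [mem_ball_zero_iff]
    exact hz.trans_lt (by gcongr)
  have hdc : DiffContOnCl ℂ g (Metric.ball 0 (σ * R)) :=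
    DifferentiableOn.diffContOnCl (by rwa [closure_ball _ hσR.ne'])
  have hsum : HasSum (fun k : ℕ => (iteratedDeriv k g 0 / (Nat.factorial k : ℂ)) * z ^ k) (g z) := by
    have h := Complex.hasSum_taylorSeries_on_ball hdc.differentiableOn hzball
    refine (funext fun k => ?_ :
      _ = fun k : ℕ => (iteratedDeriv k g 0 / (Nat.factorial k : ℂ)) * z ^ k) ▸ h
    rw [sub_zero, smul_eq_mul, smul_eq_mul]
    ring
  have hterm (k : ℕ) :
      ‖(iteratedDeriv k g 0 / (Nat.factorial k : ℂ)) * z ^ k‖ ≤ K * (ρ / σ) ^ k := by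
    have hc := Complex.norm_iteratedDeriv_le_of_forall_mem_sphere_norm_le k hσR hdc hK
    have hf : (0 : ℝ) < k.factorial := by exact_mod_cast k.factorial_pos
    rw [norm_mul, norm_div, norm_pow, Complex.norm_natCast]
    calc ‖iteratedDeriv k g 0‖ / k.factorial * ‖z‖ ^ k
        ≤ (k.factorial * K / (σ * R) ^ k) / k.factorial * (ρ * R) ^ k := by
          have h0 := (norm_nonneg _).trans hc
          gcongr
      _ = K * (ρ / σ) ^ k := by
          rw [mul_pow, mul_pow, div_pow]
          field_simp
  have htail := (hasSum_nat_add_iff' (m + 1)).2 hsum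
  have hgeo : HasSum (fun k : ℕ => K * (ρ / σ) ^ (m + 1) * (ρ / σ) ^ k)
      (K * (ρ / σ) ^ (m + 1) * (1 - ρ / σ)⁻¹) :=
    (hasSum_geometric_of_lt_one (by positivity) hq1).mul_left _
  refine htail.norm_le_of_bounded hgeo fun k => (hterm _).trans_eq ?_
  rw [pow_add]
  ring

/-- The number of terms needed: a constant `C` depending only on `B` and `q` for which
`m ≥ C * log ((π + M) / η)` forces `B * M * q ^ m ≤ η`. -/
lemma exists_const_mul_pow_le {B q : ℝ} (hB : 0 < B) (hq : 0 < q) (hq1 : q < 1) :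
    ∃ C : ℝ, 0 < C ∧ ∀ M : ℝ, 0 ≤ M → ∀ η ∈ Set.Ioo (0 : ℝ) 1, ∀ m : ℕ,
      C * Real.log ((Real.pi + M) / η) ≤ m → B * M * q ^ m ≤ η := by
  have hl : 0 < -Real.log q := neg_pos.2 (Real.log_neg hq hq1)
  refine ⟨(1 + |Real.log B|) / (-Real.log q), by positivity, ?_⟩
  rintro M hM η ⟨hη, hη1⟩ m hm
  set X := (Real.pi + M) / η with hX
  have hpi := Real.pi_gt_three
  have hXpi : Real.pi ≤ X := by
    rw [hX, le_div_iff₀ hη]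
    nlinarith
  have hX0 : 0 < X := by linarith
  have hlogX : 1 ≤ Real.log X := by
    rw [Real.le_log_iff_exp_le hX0]
    linarith [Real.exp_one_lt_d9]
  rw [div_mul_eq_mul_div, div_le_iff₀ hl] at hm
  have hlog : Real.log B + Real.log X + m * Real.log q ≤ 0 := by
    nlinarith [le_abs_self (Real.log B), abs_nonneg (Real.log B)]
  have hprod : B * X * q ^ m ≤ 1 := by
    rw [← Real.log_nonpos_iff (by positivity), Real.log_mul (by positivity) (by positivity),
      Real.log_mul hB.ne' hX0.ne', Real.log_pow]
    exact hlog
  have hMX : M ≤ X * η := by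
    rw [hX, div_mul_cancel₀ _ hη.ne']
    linarith
  calc B * M * q ^ m ≤ B * (X * η) * q ^ m := by gcongr
    _ = B * X * q ^ m * η := by ring
    _ ≤ 1 * η := by gcongr
    _ = η := one_mul η


/-- (Truncated Taylor series approximation.)  For every ratio
`ρ = r/R ∈ (0,1)` there is a constant `C > 0` such that: whenever `g` is analytic on an
open set containing the closed disk of radius `R > 0`, `g(0) = 0`, and
`Re g(z) ≤ log L` on that disk for some `L > 1`, then for every `η ∈ (0,1)`, every
`m ≥ C·log((π + log L)/η)` and every `|z| < ρ·R = r`, the degree-`m` Taylor polynomial of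
`g` at `0` approximates `g(z)` within `η`. -/
theorem taylor_truncation_bound (ρ : ℝ) (hρ : ρ ∈ Set.Ioo (0 : ℝ) 1) :
    ∃ C : ℝ, 0 < C ∧
      ∀ (R : ℝ) (g : ℂ → ℂ) (L : ℝ), 0 < R → 1 < L →
        (∃ U : Set ℂ, IsOpen U ∧ Metric.closedBall (0 : ℂ) R ⊆ U ∧ AnalyticOnNhd ℂ g U) →
        g 0 = 0 →
        (∀ z ∈ Metric.closedBall (0 : ℂ) R, (g z).re ≤ Real.log L) →
        ∀ η ∈ Set.Ioo (0 : ℝ) 1, ∀ m : ℕ,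
          C * Real.log ((Real.pi + Real.log L) / η) ≤ m →
          ∀ z : ℂ, ‖z‖ < ρ * R →
            ‖g z - ∑ k ∈ Finset.range (m + 1),
                (iteratedDeriv k g 0 / (Nat.factorial k : ℂ)) * z ^ k‖ ≤ η := by
  obtain ⟨h0, h1⟩ := hρ
  obtain ⟨σ, hσ⟩ : ∃ σ : ℝ, σ = (1 + ρ) / 2 := ⟨_, rfl⟩
  have hρσ : ρ < σ := by linarith
  have hσ1 : σ < 1 := by linarith
  have hσ0 : 0 < σ := by linarith
  have hq0 : 0 < ρ / σ := by positivity
  have hq1 : ρ / σ < 1 := (div_lt_one hσ0).2 hρσ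
  have hs : 0 < 1 - σ := by linarith
  have hq2 : 0 < 1 - ρ / σ := by linarith
  have hB : 0 < 2 * σ / (1 - σ) * (1 - ρ / σ)⁻¹ := by positivity
  obtain ⟨C, hC, hCm⟩ := exists_const_mul_pow_le hB hq0 hq1
  refine ⟨C, hC, ?_⟩
  rintro R g L hR hL ⟨U, -, hRU, hgU⟩ hg0 hre η hη m hm z hz
  have hM : 0 < Real.log L := Real.log_pos hL
  have hd : DifferentiableOn ℂ g (Metric.closedBall 0 R) := hgU.differentiableOn.mono hRU
  have hσR : σ * R < R := by nlinarith
  have hK : ∀ w ∈ Metric.sphere (0 : ℂ) (σ * R), ‖g w‖ ≤ 2 * σ / (1 - σ) * Real.log L := by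
    intro w hw
    rw [mem_sphere_zero_iff_norm] at hw
    have hbc := Complex.borelCaratheodory_zero hM (hd.mono Metric.ball_subset_closedBall)
      (fun x hx => hre x (Metric.ball_subset_closedBall hx)) hR
      (z := w) (by rw [mem_ball_zero_iff, hw]; exact hσR) hg0
    rw [hw] at hbc
    refine hbc.trans_eq ?_
    rw [show R - σ * R = (1 - σ) * R by ring]
    field_simp
  have htaylor := norm_sub_taylor_le h0 hρσ hR
    (hd.mono (Metric.closedBall_subset_closedBall hσR.le)) hK m hz.le
  refine (htaylor.trans ?_).trans (hCm _ hM.le η hη m hm)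
  calc 2 * σ / (1 - σ) * Real.log L * (ρ / σ) ^ (m + 1) * (1 - ρ / σ)⁻¹
      ≤ 2 * σ / (1 - σ) * Real.log L * (ρ / σ) ^ m * (1 - ρ / σ)⁻¹ := by
        gcongr ?_ * ?_ * _
        exact pow_le_pow_of_le_one hq0.le hq1.le m.le_succ
    _ = 2 * σ / (1 - σ) * (1 - ρ / σ)⁻¹ * Real.log L * (ρ / σ) ^ m := by ring
end

section
/- Let R > 0, let g be analytic on an open set containing the closed disk of radius R centered at 0, with g(0) = 0, and suppose Re g(z) ≤ log L for all |z| ≤ R, where L > 1. Then for every integer k ≥ 1, |g^{(k)}(0)| ≤ 2·(π + log L)·k! / R^k; consequently, for any 0 < r < R and |z| < r, the k-th Taylor term satisfies |g^{(k)}(0)|·|z|^k / k! ≤ 2·(π + log L)·(r/R)^k. -/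
/-!
The Borel–Carathéodory coefficient estimate: if `Re f ≤ M` on `|z| = R`, then
`|f^{(k)}(0)| ≤ 2 (M - Re f(0)) k! / R ^ k` for `k ≥ 1`, which is stronger than the stated bound
because `π > 0`.

By Cauchy's formula the `k`-th Taylor coefficient of `f` is the average of `z⁻ᵏ f(z)` over the
circle `|z| = R`. For `k ≥ 1` the function `zᵏ (f(z) - 2M)` is holomorphic and vanishes at `0`, so by
the mean value property its average, and hence that of its conjugate, is zero. On the circle
`conj (zᵏ) = R²ᵏ z⁻ᵏ`, so adding `R⁻²ᵏ` times this conjugate to the Cauchy integrand replaces it by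
`z⁻ᵏ (f + conj f - 2M) = -2 z⁻ᵏ (M - Re f)`. Since `M - Re f ≥ 0`, the modulus of the new integrand
is `2 R⁻ᵏ (M - Re f)`, whose average is `2 R⁻ᵏ (M - Re f(0))`, again by the mean value property.
-/

theorem norm_circleAverage_le (F : ℂ → ℂ) (c : ℂ) (R : ℝ) :
    ‖Real.circleAverage F c R‖ ≤ Real.circleAverage (fun z => ‖F z‖) c R := by
  rw [Real.circleAverage, Real.circleAverage, norm_smul, smul_eq_mul, Real.norm_of_nonneg
    (by positivity)]
  gcongr
  exact intervalIntegral.norm_integral_le_integral_norm (by positivity)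

/-- Cauchy's formula for the Taylor coefficients, written as a circle average. -/
theorem iteratedDeriv_eq_circleAverage {R : ℝ} (hR : 0 < R) {f : ℂ → ℂ}
    (hf : DiffContOnCl ℂ f (Metric.ball 0 R)) (k : ℕ) :
    iteratedDeriv k f 0 =
      (k.factorial : ℂ) * Real.circleAverage (fun z => (z ^ k)⁻¹ * f z) 0 R := by
  have h := DiffContOnCl.circleIntegral_one_div_sub_center_pow_smul hR k hf
  have h2 : (∮ z in C(0, R), (z - 0)⁻¹ • ((z ^ k)⁻¹ * f z)) =
      ∮ z in C(0, R), (1 / (z - 0) ^ (k + 1)) • f z := by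
    congr 1
    funext z
    simp only [sub_zero, smul_eq_mul, pow_succ, one_div, mul_inv]
    ring
  rw [Real.circleAverage_eq_circleIntegral hR.ne', h2, h]
  have hk : (k.factorial : ℂ) ≠ 0 := by exact_mod_cast k.factorial_ne_zero
  have hpi := Complex.two_pi_I_ne_zero
  simp only [smul_eq_mul]
  rw [div_mul_eq_mul_div, mul_div_assoc, inv_mul_cancel_left₀ hpi, mul_div_cancel₀ _ hk]

/-- The coefficient form of the Borel–Carathéodory inequality. -/
theorem norm_iteratedDeriv_le_of_re_le {R M : ℝ} (hR : 0 < R) {f : ℂ → ℂ}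
    (hf : DiffContOnCl ℂ f (Metric.ball 0 R))
    (hM : ∀ z ∈ Metric.sphere (0 : ℂ) R, (f z).re ≤ M) {k : ℕ} (hk : 1 ≤ k) :
    ‖iteratedDeriv k f 0‖ ≤ 2 * (M - (f 0).re) * k.factorial / R ^ k := by
  have habs : |R| = R := abs_of_pos hR
  have hcont : ContinuousOn f (Metric.sphere 0 R) :=
    hf.continuousOn_ball.mono Metric.sphere_subset_closedBall
  have hne : ∀ z ∈ Metric.sphere (0 : ℂ) R, z ^ k ≠ 0 := fun z hz =>
    pow_ne_zero _ (Metric.ne_of_mem_sphere hz hR.ne')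
  set p : ℂ → ℂ := fun z => z ^ k * (f z - 2 * M) with hp
  have hpd : DiffContOnCl ℂ p (Metric.ball 0 R) :=
    (Differentiable.diffContOnCl (f := fun z : ℂ => z ^ k) (by fun_prop)).smul (hf.sub_const _)
  have hpc : ContinuousOn p (Metric.sphere 0 R) :=
    hpd.continuousOn_ball.mono Metric.sphere_subset_closedBall
  have hpavg : Real.circleAverage p 0 R = 0 := by
    have h := DiffContOnCl.circleAverage (f := p) (c := 0) (R := R) (by rwa [habs])
    rw [h]
    simp [hp, Nat.one_le_iff_ne_zero.mp hk]
  have hqavg : Real.circleAverage (fun z => (((R ^ (2 * k))⁻¹ : ℝ) : ℂ) •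
      (starRingEnd ℂ) (p z)) 0 R = 0 := by
    rw [Real.circleAverage_fun_smul]
    have h := ContinuousLinearMap.circleAverage_comp_comm (R := R) (c := 0)
      (Complex.conjCLE : ℂ →L[ℝ] ℂ) (hpc.circleIntegrable hR.le)
    rw [hpavg, map_zero] at h
    have h' : Real.circleAverage (fun z => (starRingEnd ℂ) (p z)) 0 R = 0 := h
    rw [h', smul_zero]
  set F : ℂ → ℂ := fun z => (z ^ k)⁻¹ * f z + (((R ^ (2 * k))⁻¹ : ℝ) : ℂ) •
      (starRingEnd ℂ) (p z) with hF
  have hFavg : Real.circleAverage F 0 R =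
      Real.circleAverage (fun z => (z ^ k)⁻¹ * f z) 0 R := by
    rw [hF, Real.circleAverage_fun_add, hqavg, add_zero]
    · refine ContinuousOn.circleIntegrable hR.le (ContinuousOn.mul ?_ hcont)
      exact ContinuousOn.inv₀ (by fun_prop) hne
    · have hconj : ContinuousOn (fun z => (starRingEnd ℂ) (p z)) (Metric.sphere 0 R) :=
        Complex.continuous_conj.comp_continuousOn hpc
      exact ContinuousOn.circleIntegrable hR.le (by fun_prop)
  have hFnorm : ∀ z ∈ Metric.sphere (0 : ℂ) R,
      ‖F z‖ = (((R ^ k)⁻¹ * 2 : ℝ) • ((M : ℂ) - f z)).re := by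
    intro z hz
    have hzn : ‖z‖ = R := by simpa using hz
    have hc : (((R ^ (2 * k))⁻¹ : ℝ) : ℂ) * (starRingEnd ℂ) (z ^ k) = (z ^ k)⁻¹ := by
      rw [Complex.inv_def (z ^ k), Complex.normSq_eq_norm_sq, norm_pow, hzn, mul_comm]
      congr 3
      ring
    have hFz : F z = (z ^ k)⁻¹ * ((-(2 * (M - (f z).re)) : ℝ) : ℂ) := by
      have hre : f z + (starRingEnd ℂ) (f z) = 2 * ((f z).re : ℂ) := by
        rw [Complex.add_conj]; push_cast; ring
      simp only [hF, hp, smul_eq_mul, map_mul, map_sub, Complex.conj_ofReal, map_ofNat]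
      rw [← mul_assoc _ ((starRingEnd ℂ) (z ^ k)), hc]
      push_cast
      linear_combination (z ^ k)⁻¹ * hre
    have hnn := hM z hz
    rw [hFz, norm_mul, norm_inv, norm_pow, hzn, Complex.norm_real, norm_neg,
      Real.norm_of_nonneg (by linarith), Complex.smul_re]
    simp only [Complex.sub_re, Complex.ofReal_re, smul_eq_mul]
    ring
  have hgd : DiffContOnCl ℂ (fun z => ((R ^ k)⁻¹ * 2 : ℝ) • ((M : ℂ) - f z))
      (Metric.ball 0 R) := (hf.const_sub (M : ℂ)).const_smul ((R ^ k)⁻¹ * 2 : ℝ)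
  have hgavg : Real.circleAverage (fun z => ‖F z‖) 0 R = (R ^ k)⁻¹ * 2 * (M - (f 0).re) := by
    rw [Real.circleAverage_congr_sphere (f₂ := fun z =>
      (((R ^ k)⁻¹ * 2 : ℝ) • ((M : ℂ) - f z)).re) (by rw [habs]; exact hFnorm)]
    have h := ContinuousLinearMap.circleAverage_comp_comm (R := R) (c := 0) Complex.reCLM
      ((hgd.continuousOn_ball.mono Metric.sphere_subset_closedBall).circleIntegrable hR.le)
    rw [DiffContOnCl.circleAverage (by rwa [habs])] at h
    refine h.trans ?_
    simp only [Complex.reCLM_apply, Complex.smul_re, Complex.sub_re, Complex.ofReal_re, smul_eq_mul]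
  rw [iteratedDeriv_eq_circleAverage hR hf, ← hFavg, norm_mul, Complex.norm_natCast]
  calc (k.factorial : ℝ) * ‖Real.circleAverage F 0 R‖
      ≤ k.factorial * ((R ^ k)⁻¹ * 2 * (M - (f 0).re)) := by
        gcongr
        exact (norm_circleAverage_le F 0 R).trans_eq hgavg
    _ = 2 * (M - (f 0).re) * k.factorial / R ^ k := by ring


/-- (Derivative bounds from a real-part bound.)  If `g` is analytic on an
open set containing the closed disk of radius `R > 0`, `g(0) = 0`, and `Re g(z) ≤ log L`
on that disk for some `L > 1`, then for every `k ≥ 1`,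
`|g^{(k)}(0)| ≤ 2(π + log L)·k!/R^k`, and consequently for `0 < r < R` and `|z| < r` the
`k`-th Taylor term satisfies `|g^{(k)}(0)|·|z|^k/k! ≤ 2(π + log L)·(r/R)^k`. -/
theorem taylor_coefficient_bound (R : ℝ) (hR : 0 < R) (g : ℂ → ℂ) (L : ℝ) (hL : 1 < L)
    (hg : ∃ U : Set ℂ, IsOpen U ∧ Metric.closedBall (0 : ℂ) R ⊆ U ∧ AnalyticOnNhd ℂ g U)
    (hg0 : g 0 = 0)
    (hre : ∀ z ∈ Metric.closedBall (0 : ℂ) R, (g z).re ≤ Real.log L) :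
    ∀ k : ℕ, 1 ≤ k →
      (‖iteratedDeriv k g 0‖ ≤ 2 * (Real.pi + Real.log L) * (Nat.factorial k) / R ^ k ∧
        ∀ r : ℝ, 0 < r → r < R → ∀ z : ℂ, ‖z‖ < r →
          ‖iteratedDeriv k g 0‖ * ‖z‖ ^ k / (Nat.factorial k) ≤
            2 * (Real.pi + Real.log L) * (r / R) ^ k) := by
  intro k hk
  obtain ⟨U, -, hUR, hgU⟩ := hg
  have hd : DiffContOnCl ℂ g (Metric.ball 0 R) :=
    DifferentiableOn.diffContOnCl
      (hgU.differentiableOn.mono (Metric.closure_ball_subset_closedBall.trans hUR))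
  have hpi := Real.pi_pos
  have hlog := Real.log_pos hL
  have hfac : (0 : ℝ) < k.factorial := by exact_mod_cast k.factorial_pos
  have hmain : ‖iteratedDeriv k g 0‖ ≤
      2 * (Real.pi + Real.log L) * (Nat.factorial k) / R ^ k := by
    refine (norm_iteratedDeriv_le_of_re_le hR hd
      (fun z hz => hre z (Metric.sphere_subset_closedBall hz)) hk).trans ?_
    rw [hg0, Complex.zero_re, sub_zero]
    gcongr
    linarith
  refine ⟨hmain, fun r hr _ z hz => ?_⟩
  calc ‖iteratedDeriv k g 0‖ * ‖z‖ ^ k / (Nat.factorial k)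
      ≤ (2 * (Real.pi + Real.log L) * (Nat.factorial k) / R ^ k) * r ^ k / (Nat.factorial k) := by
        gcongr
    _ = 2 * (Real.pi + Real.log L) * (r / R) ^ k := by
        rw [div_pow]
        field_simp
end

section
/- Let γ ∈ (0,1), set α(γ) = 1 − exp(−1/γ), r̂(γ) = (1 − exp(−1 − 1/γ)) / (1 − exp(−1/γ)), and S_γ(z) = −γ·log(1 − α(γ)·z), using the principal branch of the logarithm. Then S_γ is analytic on the open disk D(0, r̂(γ)), which has radius r̂(γ) > 1; S_γ(0) = 0 and S_γ(1) = 1; for every z ∈ D(0, r̂(γ)) one has −γ ≤ Re S_γ(z) ≤ 1 + γ and |Im S_γ(z)| ≤ πγ/2; for any 0 < γ' < γ < 1 one has S_{γ'}(D(0, r̂(γ'))) ⊆ S_γ(D(0, r̂(γ))); and ⋂_{γ∈(0,1)} S_γ(D(0, r̂(γ))) = [0,1]. -/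
/-!
Substituting `w = 1 - α(γ) z` turns `S_γ(D(0, r̂(γ)))` into the set of values `-γ log w` with
`‖1 - w‖ < ρ(γ) := 1 - exp(-1 - 1/γ) < 1` (`mem_image_Sgam_iff`). On that disk `Re w > 0`
and `exp(-1 - 1/γ) ≤ ‖w‖ ≤ 2`, which gives analyticity and the bounds on real and imaginary parts.

Nestedness: for `γ' < γ` put `s = γ'/γ ∈ (0,1)`; one needs that `w ↦ w ^ s` maps the disk
`‖1 - w‖ < ρ(γ')` into `‖1 - w‖ < ρ(γ)`. The key inequality is
`‖1 - (1 - z) ^ s‖ ≤ 1 - (1 - ‖z‖) ^ s` for `‖z‖ < 1` (`norm_one_sub_cpow_le`), which bounds the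
left side by `1 - exp(s (-1 - 1/γ')) = 1 - exp(-s - 1/γ) < ρ(γ)`.

Intersection: a point of all the images satisfies the strip bounds for every `γ`, so letting
`γ → 0` it lies in `[0,1]`; conversely, for `x ∈ [0,1]` the point `w = exp(-x/γ)` satisfies
`‖1 - w‖ ≤ 1 - exp(-1/γ) < ρ(γ)`.
-/

/-- `α(γ) = 1 − exp(−1/γ)`. -/
noncomputable def barAlpha (γ : ℝ) : ℝ := 1 - Real.exp (-1 / γ)

/-- `r̂(γ) = (1 − exp(−1 − 1/γ)) / (1 − exp(−1/γ))`. -/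
noncomputable def barR (γ : ℝ) : ℝ :=
  (1 - Real.exp (-1 - 1 / γ)) / (1 - Real.exp (-1 / γ))

/-- Barvinok's map `S_γ(z) = −γ·log(1 − α(γ)z)` (principal branch of `log`). -/
noncomputable def Sgam (γ : ℝ) (z : ℂ) : ℂ :=
  -(γ : ℂ) * Complex.log (1 - (barAlpha γ : ℂ) * z)

open Set

private lemma barAlpha_pos {γ : ℝ} (hγ : 0 < γ) : 0 < barAlpha γ := by
  unfold barAlpha
  have : Real.exp (-1 / γ) < 1 := Real.exp_lt_one_iff.2 (div_neg_of_neg_of_pos (by norm_num) hγ)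
  linarith

private lemma barAlpha_mul_barR {γ : ℝ} (hγ : 0 < γ) :
    barAlpha γ * barR γ = 1 - Real.exp (-1 - 1 / γ) := by
  have h := (barAlpha_pos hγ).ne'
  rw [barR, ← barAlpha, mul_div_assoc', mul_div_cancel_left₀ _ h]

private lemma exp_lt_exp_neg_inv (γ : ℝ) : Real.exp (-1 - 1 / γ) < Real.exp (-1 / γ) := by
  apply Real.exp_lt_exp.2
  rw [neg_div]
  linarith

private lemma mem_ball_iff {γ : ℝ} (hγ : 0 < γ) (z : ℂ) :
    z ∈ Metric.ball (0 : ℂ) (barR γ) ↔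
      ‖(barAlpha γ : ℂ) * z‖ < 1 - Real.exp (-1 - 1 / γ) := by
  rw [mem_ball_zero_iff, norm_mul, Complex.norm_real, Real.norm_of_nonneg (barAlpha_pos hγ).le,
    ← barAlpha_mul_barR hγ, mul_lt_mul_iff_right₀ (barAlpha_pos hγ)]

private lemma mem_image_Sgam_iff {γ : ℝ} (hγ : 0 < γ) (u : ℂ) :
    u ∈ Sgam γ '' Metric.ball (0 : ℂ) (barR γ) ↔
      ∃ w : ℂ, ‖1 - w‖ < 1 - Real.exp (-1 - 1 / γ) ∧ -(γ : ℂ) * Complex.log w = u := by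
  have hα : (barAlpha γ : ℂ) ≠ 0 := by exact_mod_cast (barAlpha_pos hγ).ne'
  constructor
  · rintro ⟨z, hz, rfl⟩
    refine ⟨1 - barAlpha γ * z, ?_, rfl⟩
    rw [sub_sub_cancel]
    exact (mem_ball_iff hγ z).1 hz
  · rintro ⟨w, hw, rfl⟩
    have h : (barAlpha γ : ℂ) * ((1 - w) / barAlpha γ) = 1 - w := by field_simp
    refine ⟨(1 - w) / barAlpha γ, ?_, ?_⟩
    · rw [mem_ball_iff hγ, h]
      exact hw
    · rw [Sgam, h, sub_sub_cancel]

private lemma re_pos_of_norm_lt {w : ℂ} (hw : ‖1 - w‖ < 1) : 0 < w.re := by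
  have := (Complex.re_le_norm (1 - w)).trans_lt hw
  simp at this
  exact this

/-- The image of the disk lies in the rectangle `[-γ, 1 + γ] × [-πγ/2, πγ/2]`. -/
private lemma strip_bounds {γ : ℝ} (hγ : 0 < γ) {w : ℂ}
    (hw : ‖1 - w‖ < 1 - Real.exp (-1 - 1 / γ)) :
    -γ ≤ (-(γ : ℂ) * Complex.log w).re ∧ (-(γ : ℂ) * Complex.log w).re ≤ 1 + γ ∧
      |(-(γ : ℂ) * Complex.log w).im| ≤ Real.pi * γ / 2 := by
  have he := Real.exp_pos (-1 - 1 / γ)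
  have hre := re_pos_of_norm_lt (w := w) (by linarith)
  have hw0 : 0 < ‖w‖ := hre.trans_le (Complex.re_le_norm w)
  have hup : ‖w‖ ≤ 2 := by
    have := norm_sub_le (1 : ℂ) (1 - w)
    rw [sub_sub_cancel, norm_one] at this
    linarith
  have hlo : Real.exp (-1 - 1 / γ) ≤ ‖w‖ := by
    have := norm_sub_norm_le (1 : ℂ) w
    rw [norm_one] at this
    linarith
  have h1 : Real.log ‖w‖ ≤ 1 := by
    have := Real.log_le_sub_one_of_pos hw0
    linarith
  have h2 : -1 - 1 / γ ≤ Real.log ‖w‖ := (Real.le_log_iff_exp_le hw0).2 hlo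
  have harg : |Complex.arg w| ≤ Real.pi / 2 := Complex.abs_arg_le_pi_div_two_iff.2 hre.le
  have hR : (-(γ : ℂ) * Complex.log w).re = -γ * Real.log ‖w‖ := by simp [Complex.log_re]
  have hI : (-(γ : ℂ) * Complex.log w).im = -γ * Complex.arg w := by simp [Complex.log_im]
  rw [hR, hI]
  refine ⟨by nlinarith, ?_, ?_⟩
  · have h3 := mul_le_mul_of_nonneg_left h2 hγ.le
    have : γ * (-1 - 1 / γ) = -γ - 1 := by field_simp
    linarith
  · rw [abs_mul, abs_neg, abs_of_pos hγ]
    nlinarith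

/-- All Taylor coefficients of `1 - (1 - z) ^ s` at `0` are nonnegative, hence the inequality. The
proof compares derivatives along the ray `t ↦ t z` instead: since `s - 1 ≤ 0`, one has
`‖1 - t z‖ ^ (s - 1) ≤ (1 - t ‖z‖) ^ (s - 1)`. -/
private lemma norm_one_sub_cpow_le {s : ℝ} (hs0 : 0 < s) (hs1 : s ≤ 1) {z : ℂ} (hz : ‖z‖ < 1) :
    ‖1 - (1 - z) ^ (s : ℂ)‖ ≤ 1 - (1 - ‖z‖) ^ s := by
  have hlt : ∀ t ∈ Icc (0 : ℝ) 1, 0 < 1 - t * ‖z‖ := fun t ht => by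
    nlinarith [ht.1, ht.2, norm_nonneg z]
  have hnorm : ∀ t ∈ Icc (0 : ℝ) 1, ‖(t : ℂ) * z‖ = t * ‖z‖ := fun t ht => by
    rw [norm_mul, Complex.norm_real, Real.norm_of_nonneg ht.1]
  have hslit : ∀ t ∈ Icc (0 : ℝ) 1, 1 - (t : ℂ) * z ∈ Complex.slitPlane := fun t ht => by
    refine Or.inl (re_pos_of_norm_lt ?_)
    rw [sub_sub_cancel, hnorm t ht]
    linarith [hlt t ht]
  have hf : ∀ t ∈ Icc (0 : ℝ) 1, HasDerivAt (fun t : ℝ => 1 - (1 - (t : ℂ) * z) ^ (s : ℂ))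
      (s * (1 - (t : ℂ) * z) ^ ((s : ℂ) - 1) * z) t := fun t ht => by
    have h1 : HasDerivAt (fun t : ℝ => 1 - (t : ℂ) * z) (-z) t := by
      simpa using ((Complex.ofRealCLM.hasDerivAt (x := t)).mul_const z).const_sub 1
    have h2 := ((Complex.hasStrictDerivAt_cpow_const (c := (s : ℂ)) (hslit t ht)).hasDerivAt.comp
      t h1).const_sub 1
    refine h2.congr_deriv ?_
    ring
  have hB : ∀ t ∈ Icc (0 : ℝ) 1, HasDerivAt (fun t : ℝ => 1 - (1 - t * ‖z‖) ^ s)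
      (s * (1 - t * ‖z‖) ^ (s - 1) * ‖z‖) t := fun t ht => by
    have h1 : HasDerivAt (fun t : ℝ => 1 - t * ‖z‖) (-‖z‖) t := by
      simpa using ((hasDerivAt_id t).mul_const ‖z‖).const_sub 1
    have h2 := (h1.rpow_const (p := s) (Or.inl (hlt t ht).ne')).const_sub 1
    refine h2.congr_deriv ?_
    ring
  have key := image_norm_le_of_norm_deriv_right_le_deriv_boundary'
    (f := fun t : ℝ => 1 - (1 - (t : ℂ) * z) ^ (s : ℂ))
    (B := fun t : ℝ => 1 - (1 - t * ‖z‖) ^ s) (a := 0) (b := 1)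
    (fun t ht => (hf t ht).continuousAt.continuousWithinAt)
    (fun t ht => (hf t (Ico_subset_Icc_self ht)).hasDerivWithinAt)
    (by simp)
    (fun t ht => (hB t ht).continuousAt.continuousWithinAt)
    (fun t ht => (hB t (Ico_subset_Icc_self ht)).hasDerivWithinAt)
    (fun t ht => ?_) (right_mem_Icc.2 zero_le_one)
  · simpa using key
  · have ht' := Ico_subset_Icc_self ht
    have hc : ((s : ℂ) - 1) = ((s - 1 : ℝ) : ℂ) := by push_cast; rfl
    rw [norm_mul, norm_mul, Complex.norm_real, Real.norm_of_nonneg hs0.le, hc,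
      Complex.norm_cpow_real]
    have h : 1 - t * ‖z‖ ≤ ‖1 - (t : ℂ) * z‖ := by
      have := norm_sub_norm_le (1 : ℂ) (t * z)
      rwa [norm_one, hnorm t ht'] at this
    have := Real.rpow_le_rpow_of_nonpos (hlt t ht') h (by linarith : s - 1 ≤ 0)
    gcongr

private lemma image_mono {γ' γ : ℝ} (hγ' : 0 < γ') (h : γ' < γ) :
    Sgam γ' '' Metric.ball (0 : ℂ) (barR γ') ⊆ Sgam γ '' Metric.ball (0 : ℂ) (barR γ) := by
  have hγ : 0 < γ := hγ'.trans h
  intro u hu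
  obtain ⟨w, hw, rfl⟩ := (mem_image_Sgam_iff hγ' u).1 hu
  rw [mem_image_Sgam_iff hγ]
  have he := Real.exp_pos (-1 - 1 / γ')
  have hre : 0 < w.re := re_pos_of_norm_lt (by linarith)
  have hw0 : w ≠ 0 := by rintro rfl; simp at hre
  set s : ℝ := γ' / γ with hs
  have hs0 : 0 < s := div_pos hγ' hγ
  have hs1 : s < 1 := (div_lt_one hγ).2 h
  have harg : |Complex.arg w| ≤ Real.pi / 2 := Complex.abs_arg_le_pi_div_two_iff.2 hre.le
  have hsarg : |s * Complex.arg w| ≤ Real.pi / 2 := by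
    rw [abs_mul, abs_of_pos hs0]
    nlinarith [abs_nonneg (Complex.arg w)]
  have hpi := Real.pi_pos
  obtain ⟨ha, hb⟩ := abs_le.1 hsarg
  refine ⟨w ^ (s : ℂ), ?_, ?_⟩
  · have h1 := norm_one_sub_cpow_le hs0 hs1.le (z := 1 - w) (by linarith)
    rw [sub_sub_cancel] at h1
    have h2 : Real.exp (-1 - 1 / γ') ^ s < (1 - ‖1 - w‖) ^ s :=
      Real.rpow_lt_rpow he.le (by linarith) hs0
    rw [← Real.exp_mul] at h2
    have h3 : (-1 - 1 / γ') * s = -s - 1 / γ := by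
      rw [hs]
      field_simp
    have h4 : Real.exp (-1 - 1 / γ) ≤ Real.exp (-s - 1 / γ) := Real.exp_le_exp.2 (by linarith)
    rw [h3] at h2
    linarith
  · have him : (Complex.log w * s).im = s * Complex.arg w := by
      simp [Complex.log_im, mul_comm]
    rw [Complex.cpow_def_of_ne_zero hw0, Complex.log_exp (by rw [him]; linarith)
      (by rw [him]; linarith), hs]
    have : (γ : ℂ) ≠ 0 := by exact_mod_cast hγ.ne'
    push_cast
    field_simp

private lemma ofReal_mem_image {γ x : ℝ} (hγ : 0 < γ) (hx : x ∈ Icc (0 : ℝ) 1) :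
    (x : ℂ) ∈ Sgam γ '' Metric.ball (0 : ℂ) (barR γ) := by
  rw [mem_image_Sgam_iff hγ]
  refine ⟨(Real.exp (-x / γ) : ℝ), ?_, ?_⟩
  · have h1 : Real.exp (-x / γ) ≤ 1 :=
      Real.exp_le_one_iff.2 (div_nonpos_of_nonpos_of_nonneg (by linarith [hx.1]) hγ.le)
    have h2 : Real.exp (-1 / γ) ≤ Real.exp (-x / γ) :=
      Real.exp_le_exp.2 (by gcongr; exact hx.2)
    rw [← Complex.ofReal_one, ← Complex.ofReal_sub, Complex.norm_real,
      Real.norm_of_nonneg (by linarith)]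
    linarith [exp_lt_exp_neg_inv γ]
  · rw [← Complex.ofReal_log (Real.exp_pos _).le, Real.log_exp]
    have : (γ : ℂ) ≠ 0 := by exact_mod_cast hγ.ne'
    push_cast
    field_simp

/-- (Barvinok's disk-to-strip maps.)  For `γ ∈ (0,1)`: `r̂(γ) > 1`;
`S_γ` is analytic on `D(0, r̂(γ))`; `S_γ(0) = 0` and `S_γ(1) = 1`;
`−γ ≤ Re S_γ(z) ≤ 1 + γ` and `|Im S_γ(z)| ≤ πγ/2` on `D(0, r̂(γ))`; the images
`S_γ(D(0, r̂(γ)))` are nested increasing in `γ`; and their intersection over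
`γ ∈ (0,1)` is exactly `[0,1] ⊆ ℂ`. -/
theorem barvinok_map_properties (γ : ℝ) (hγ : γ ∈ Set.Ioo (0 : ℝ) 1) :
    1 < barR γ ∧
    AnalyticOnNhd ℂ (Sgam γ) (Metric.ball (0 : ℂ) (barR γ)) ∧
    Sgam γ 0 = 0 ∧ Sgam γ 1 = 1 ∧
    (∀ z ∈ Metric.ball (0 : ℂ) (barR γ),
      -γ ≤ (Sgam γ z).re ∧ (Sgam γ z).re ≤ 1 + γ ∧
        |(Sgam γ z).im| ≤ Real.pi * γ / 2) ∧
    (∀ γ' : ℝ, 0 < γ' → γ' < γ →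
      Sgam γ' '' Metric.ball (0 : ℂ) (barR γ') ⊆ Sgam γ '' Metric.ball (0 : ℂ) (barR γ)) ∧
    (⋂ γ'' ∈ Set.Ioo (0 : ℝ) 1, Sgam γ'' '' Metric.ball (0 : ℂ) (barR γ'')) =
      (fun x : ℝ => (x : ℂ)) '' Set.Icc (0 : ℝ) 1 := by
  have hpos := hγ.1
  refine ⟨?_, ?_, ?_, ?_, ?_, fun γ' h0 h1 => image_mono h0 h1, ?_⟩
  · have h1 := exp_lt_exp_neg_inv γ
    have h2 := barAlpha_pos hpos
    unfold barAlpha at h2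
    rw [barR, one_lt_div h2]
    linarith
  · intro z hz
    have hmem : 1 - (barAlpha γ : ℂ) * z ∈ Complex.slitPlane := by
      refine Or.inl (re_pos_of_norm_lt ?_)
      rw [sub_sub_cancel]
      linarith [(mem_ball_iff hpos z).1 hz, Real.exp_pos (-1 - 1 / γ)]
    have hin : AnalyticAt ℂ (fun z : ℂ => 1 - (barAlpha γ : ℂ) * z) z := by fun_prop
    exact analyticAt_const.mul (hin.clog hmem)
  · simp [Sgam]
  · have h : (1 : ℂ) - (barAlpha γ : ℂ) * 1 = (Real.exp (-1 / γ) : ℝ) := by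
      simp [barAlpha]
    rw [Sgam, h, ← Complex.ofReal_log (Real.exp_pos _).le, Real.log_exp]
    have : (γ : ℂ) ≠ 0 := by exact_mod_cast hpos.ne'
    push_cast
    field_simp
  · intro z hz
    refine strip_bounds hpos (w := 1 - barAlpha γ * z) ?_
    rw [sub_sub_cancel]
    exact (mem_ball_iff hpos z).1 hz
  · apply Subset.antisymm
    · intro u hu
      have hb : ∀ ε ∈ Ioo (0 : ℝ) 1,
          -ε ≤ u.re ∧ u.re ≤ 1 + ε ∧ |u.im| ≤ Real.pi * ε / 2 := fun ε hε => by
        obtain ⟨w, hw, rfl⟩ := (mem_image_Sgam_iff hε.1 u).1 (mem_iInter₂.1 hu ε hε)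
        exact strip_bounds hε.1 hw
      -- the bounds at `ε ∈ (0,1)` pass to the limit `ε → 0⁺`
      have hlim : ∀ {f g : ℝ → ℝ}, Continuous f → Continuous g →
          (∀ ε ∈ Ioo (0 : ℝ) 1, f ε ≤ g ε) → f 0 ≤ g 0 := fun {f g} hf hg hfg => by
        have hcl : (0 : ℝ) ∈ closure (Ioo (0 : ℝ) 1) := by
          rw [closure_Ioo (by norm_num)]
          simp
        exact closure_minimal (t := {x | f x ≤ g x}) hfg (isClosed_le hf hg) hcl
      have h1 := hlim (f := fun ε => -ε) (g := fun _ => u.re) (by fun_prop) (by fun_prop)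
        (fun ε hε => (hb ε hε).1)
      have h2 := hlim (f := fun _ => u.re) (g := fun ε => 1 + ε) (by fun_prop) (by fun_prop)
        (fun ε hε => (hb ε hε).2.1)
      have h3 := hlim (f := fun _ => |u.im|) (g := fun ε => Real.pi * ε / 2) (by fun_prop)
        (by fun_prop) (fun ε hε => (hb ε hε).2.2)
      simp only [neg_zero, add_zero, mul_zero, zero_div] at h1 h2 h3
      refine ⟨u.re, ⟨h1, h2⟩, ?_⟩
      have him : u.im = 0 := abs_nonpos_iff.1 h3
      apply Complex.ext <;> simp [him]
    · rintro _ ⟨x, hx, rfl⟩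
      exact mem_iInter₂.2 fun ε hε => ofReal_mem_image hε.1 hx
end

section
/- For a ∈ (0,1), let U_a ⊆ ℂ be the union of: the open disk D₁(a) with center −a²/(1−a²) and radius a/(1−a²); the open disk D₂(a) with center 1/(1−a²) and radius a/(1−a²); and the rectangle T(a) = { z ∈ ℂ : −a²/(1−a²) ≤ Re z ≤ 1/(1−a²), |Im z| ≤ a/(1−a²) }. Then for every γ with 0 < γ ≤ a/4, the image S_γ(D(0, r̂(γ))) is contained in U_a. -/
/-- The stadium-shaped region `U_a`: union of the disk `D₁(a)` centered at `−a²/(1−a²)`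
of radius `a/(1−a²)`, the disk `D₂(a)` centered at `1/(1−a²)` of radius `a/(1−a²)`,
and the rectangle `T(a)`. -/
noncomputable def Ua (a : ℝ) : Set ℂ :=
  Metric.ball (-(a ^ 2 / (1 - a ^ 2)) : ℂ) (a / (1 - a ^ 2)) ∪
  Metric.ball ((1 / (1 - a ^ 2) : ℝ) : ℂ) (a / (1 - a ^ 2)) ∪
  {z : ℂ | -(a ^ 2 / (1 - a ^ 2)) ≤ z.re ∧ z.re ≤ 1 / (1 - a ^ 2) ∧
    |z.im| ≤ a / (1 - a ^ 2)}

/-- The image of `D(0, r̂(γ))` under `S_γ` lies in the open rectangle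
`(-γ, 1 + γ) × (-8γ/5, 8γ/5)`; the constant `8/5` is a rational upper bound for `π/2`. -/
theorem Sgam_bounds {γ : ℝ} (hγ : 0 < γ) {z : ℂ} (hz : ‖z‖ < barR γ) :
    -γ < (Sgam γ z).re ∧ (Sgam γ z).re < 1 + γ ∧ |(Sgam γ z).im| < γ * (8 / 5) := by
  have hα : 0 < barAlpha γ := by
    have h : Real.exp (-1 / γ) < 1 := Real.exp_lt_one_iff.2 (div_neg_of_neg_of_pos (by norm_num) hγ)
    unfold barAlpha
    linarith
  have hαz : ‖(barAlpha γ : ℂ) * z‖ < 1 - Real.exp (-1 - 1 / γ) := by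
    rw [norm_mul, Complex.norm_real, Real.norm_of_nonneg hα.le]
    calc barAlpha γ * ‖z‖ < barAlpha γ * barR γ := mul_lt_mul_of_pos_left hz hα
      _ = 1 - Real.exp (-1 - 1 / γ) := mul_div_cancel₀ _ hα.ne'
  have hε := Real.exp_pos (-1 - 1 / γ)
  set u : ℂ := (barAlpha γ : ℂ) * z with hu
  have hre : 0 < (1 - u).re := by
    have := Complex.re_le_norm u
    simp only [Complex.sub_re, Complex.one_re]
    linarith
  have hlow : Real.exp (-1 - 1 / γ) < ‖1 - u‖ := by
    have := norm_sub_norm_le (1 : ℂ) u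
    rw [norm_one] at this
    linarith
  have hup : ‖1 - u‖ < 2 := by
    have := norm_sub_le (1 : ℂ) u
    rw [norm_one] at this
    linarith
  have hpos : 0 < ‖1 - u‖ := hε.trans hlow
  have hlog_up : Real.log ‖1 - u‖ < 1 := by
    linarith [Real.log_le_sub_one_of_pos hpos]
  have hlog_low : -1 - 1 / γ < Real.log ‖1 - u‖ := (Real.lt_log_iff_exp_lt hpos).2 hlow
  have harg : |(1 - u).arg| < 8 / 5 := by
    have := Complex.abs_arg_lt_pi_div_two_iff.2 (Or.inl hre)
    linarith [Real.pi_lt_d2]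
  have hSre : (Sgam γ z).re = -γ * Real.log ‖1 - u‖ := by
    simp [Sgam, ← hu, Complex.log_re]
  have hSim : (Sgam γ z).im = -γ * (1 - u).arg := by
    simp [Sgam, ← hu, Complex.log_im]
  rw [hSre, hSim, abs_mul, abs_neg, abs_of_pos hγ]
  refine ⟨by nlinarith, ?_, mul_lt_mul_of_pos_left harg hγ⟩
  have h := mul_lt_mul_of_pos_left hlog_low hγ
  have h1 : γ * (-1 - 1 / γ) = -γ - 1 := by field_simp
  linarith

/-- A point whose offsets from a real center `c` are less than `γ` horizontally and `8γ/5`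
vertically is within `2γ` of `c`, because `1 + (8/5)² < 2²`. -/
theorem norm_sub_ofReal_lt {γ c : ℝ} (hγ : 0 < γ) {s : ℂ} (hx : |s.re - c| < γ)
    (hy : |s.im| < γ * (8 / 5)) : ‖s - (c : ℂ)‖ < 2 * γ := by
  refine lt_of_pow_lt_pow_left₀ 2 (by positivity) ?_
  rw [Complex.sq_norm, Complex.normSq_apply]
  simp only [Complex.sub_re, Complex.sub_im, Complex.ofReal_re, Complex.ofReal_im, sub_zero]
  have h1 := sq_lt_sq' (abs_lt.1 hx).1 (abs_lt.1 hx).2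
  have h2 := sq_lt_sq' (abs_lt.1 hy).1 (abs_lt.1 hy).2
  nlinarith [sq_nonneg γ]

/-- For `a ∈ (0,1)` and `0 < γ ≤ a/4`, the image of the disk
`D(0, r̂(γ))` under `S_γ` is contained in `U_a`. -/
theorem barvinok_image_in_Ua (a : ℝ) (ha : a ∈ Set.Ioo (0 : ℝ) 1)
    (γ : ℝ) (hγ0 : 0 < γ) (hγ : γ ≤ a / 4) :
    Sgam γ '' Metric.ball (0 : ℂ) (barR γ) ⊆ Ua a := by
  obtain ⟨ha0, ha1⟩ := ha
  rintro _ ⟨z, hz, rfl⟩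
  rw [mem_ball_zero_iff] at hz
  obtain ⟨hlo, hhi, him⟩ := Sgam_bounds hγ0 hz
  generalize Sgam γ z = s at hlo hhi him
  have hL : 0 < 1 - a ^ 2 := by nlinarith
  have hc1 : 0 ≤ a ^ 2 / (1 - a ^ 2) := by positivity
  have hc2 : 1 ≤ 1 / (1 - a ^ 2) := by
    rw [le_div_iff₀ hL]
    nlinarith
  have hrad : a ≤ a / (1 - a ^ 2) := by
    rw [le_div_iff₀ hL]
    nlinarith [pow_pos ha0 3]
  rcases lt_or_ge s.re (-(a ^ 2 / (1 - a ^ 2))) with h1 | h1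
  · refine Or.inl (Or.inl ?_)
    have h := norm_sub_ofReal_lt (c := -(a ^ 2 / (1 - a ^ 2))) hγ0
      (abs_lt.2 ⟨by linarith, by linarith⟩) him
    push_cast at h
    rw [mem_ball_iff_norm]
    linarith
  rcases lt_or_ge (1 / (1 - a ^ 2)) s.re with h2 | h2
  · refine Or.inl (Or.inr ?_)
    have h := norm_sub_ofReal_lt (c := 1 / (1 - a ^ 2)) hγ0
      (abs_lt.2 ⟨by linarith, by linarith⟩) him
    rw [mem_ball_iff_norm]
    linarith
  · exact Or.inr ⟨h1, h2, by linarith⟩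
end

section
/- Let a ∈ (0, 1/2], let N be a natural number with N + 1 ≤ 2π/(6√a), and let β* ∈ ℂ with |β*| ≤ 1. For k ∈ {−N,…,N} set w_k = exp(iπk/(2(N+1))) and μ_k(z) = β*·w_k·z/(1 − z + w_k·z). Then { μ_k(z) : z ∈ U_a, 1 − z + w_k·z ≠ 0 } ⊆ D(0, |β*| + 4√a). -/
/-!
Write `w = c + i s` for the rotation, `z = x + i y` and `r = √a`. Since `‖βs‖ ≤ 1` and `‖w‖ = 1`,
it is enough to show `‖z‖ < (1 + 4r) ‖1 - z + w z‖` on `Ua a`. Expanding with `c² + s² = 1`,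
`‖1 - z + w z‖² = 1 + 2(1 - c)(‖z‖² - x) - 2 s y`.

If `N = 0`, then `w = 1` and the claim is a bound on `‖z‖`. If `N ≥ 1`, the hypothesis on `N` forces
`r ≤ π/6`, so that `|y| ≤ a/(1-a²) ≤ 0.57 r`. The angle of `w` lies in `[-π/2, π/2]`, hence
`0 ≤ c ≤ 1` and `|s| ≤ 1`, and the squared denominator is at least
`1 - 2|y| - 2 max(x - ‖z‖², 0)`. When `x ≥ ‖z‖²` this bound equals
`2(x - 1/2)² + 2(1/2 - |y|)²`, and `(1 + 4r)(1/2 - |y|) ≥ 1/2` finishes the proof; when `x < ‖z‖²`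
the bound `‖z‖² ≤ (1-a)⁻² + y²` does.
-/


/-- The rotation `w_k = exp(iπk/(2(N+1)))`. -/
noncomputable def rotW (N : ℕ) (k : ℤ) : ℂ :=
  Complex.exp (Real.pi * k * Complex.I / (2 * ((N : ℂ) + 1)))

/-- The Möbius map `μ_k(z) = β*·w_k·z/(1 − z + w_k·z)`. -/
noncomputable def mobiusArc (βs : ℂ) (N : ℕ) (k : ℤ) (z : ℂ) : ℂ :=
  βs * rotW N k * z / (1 - z + rotW N k * z)

/-- `M_k = μ_k(U_a)` (away from the pole of `μ_k`). -/
noncomputable def Mset (βs : ℂ) (N : ℕ) (a : ℝ) (k : ℤ) : Set ℂ :=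
  mobiusArc βs N k '' {z ∈ Ua a | (1 : ℂ) - z + rotW N k * z ≠ 0}

/-- `Ua a` lies in a rectangle symmetric about the origin. -/
lemma Ua_bounds {a : ℝ} (h0 : 0 < a) (h1 : a ≤ 1 / 2) {z : ℂ} (hz : z ∈ Ua a) :
    |z.re| ≤ 1 / (1 - a) ∧ |z.im| ≤ a / (1 - a ^ 2) := by
  have hp : 0 < 1 - a ^ 2 := by nlinarith
  have hq : 0 < 1 - a := by linarith
  have e1 : 1 / (1 - a) = 1 / (1 - a ^ 2) + a / (1 - a ^ 2) := by
    have : 1 - a ^ 2 = (1 - a) * (1 + a) := by ring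
    rw [this]; field_simp
  have e2 : a ^ 2 / (1 - a ^ 2) ≤ 1 / (1 - a ^ 2) := by
    gcongr; nlinarith
  have e3 : 0 < a / (1 - a ^ 2) := by positivity
  have e4 : 0 < a ^ 2 / (1 - a ^ 2) := by positivity
  rw [e1]
  rcases hz with (hz | hz) | ⟨hz1, hz2, hz3⟩
  · have hc : (-(a ^ 2 / (1 - a ^ 2)) : ℂ) = ((-(a ^ 2 / (1 - a ^ 2)) : ℝ) : ℂ) := by
      push_cast; rfl
    rw [Metric.mem_ball, dist_eq_norm, hc] at hz
    have hr := (Complex.abs_re_le_norm _).trans hz.le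
    have hi := (Complex.abs_im_le_norm _).trans hz.le
    rw [Complex.sub_re, Complex.ofReal_re, abs_le] at hr
    rw [Complex.sub_im, Complex.ofReal_im, sub_zero] at hi
    exact ⟨abs_le.2 ⟨by linarith, by linarith⟩, hi⟩
  · rw [Metric.mem_ball, dist_eq_norm] at hz
    have hr := (Complex.abs_re_le_norm _).trans hz.le
    have hi := (Complex.abs_im_le_norm _).trans hz.le
    rw [Complex.sub_re, Complex.ofReal_re, abs_le] at hr
    rw [Complex.sub_im, Complex.ofReal_im, sub_zero] at hi
    exact ⟨abs_le.2 ⟨by linarith, by linarith⟩, hi⟩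
  · exact ⟨abs_le.2 ⟨by linarith, by linarith⟩, hz3⟩

/-- The inequality `‖z‖² < (1 + 4r)² ‖1 - z + w z‖²` for `N ≥ 1`, in real coordinates, with `t = |y|`
and `d` the squared denominator. -/
lemma core_ineq {r x t c d : ℝ} (hr : 0 < r) (hr' : r ≤ 0.524) (ht : 0 ≤ t) (ht' : t ≤ 0.57 * r)
    (hx : |x| ≤ 1 + 0.73 * r) (hc0 : 0 ≤ c) (hc1 : c ≤ 1)
    (hd : 1 + 2 * (1 - c) * (x ^ 2 + t ^ 2 - x) - 2 * t ≤ d) :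
    x ^ 2 + t ^ 2 < (1 + 4 * r) ^ 2 * d := by
  have hM : 0 < (1 + 4 * r) ^ 2 := by positivity
  rcases le_total (x ^ 2 + t ^ 2) x with h | h
  · have hd' : 2 * (x - 1 / 2) ^ 2 + 2 * (1 / 2 - t) ^ 2 ≤ d := by
      nlinarith [mul_nonneg hc0 (sub_nonneg.2 h)]
    have h1 : 1 / 2 ≤ (1 + 4 * r) * (1 / 2 - t) := by nlinarith
    have h2 : 1 / 4 ≤ (1 + 4 * r) ^ 2 * (1 / 2 - t) ^ 2 := by nlinarith
    have h3 : (1 + 8 * r) * (x - 1 / 2) ^ 2 ≤ (1 + 4 * r) ^ 2 * (x - 1 / 2) ^ 2 := by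
      gcongr; nlinarith
    have h4 := mul_le_mul_of_nonneg_left hd' hM.le
    have h5 : t ^ 2 ≤ 0.18 * r := by nlinarith
    nlinarith [mul_nonneg hr.le (sq_nonneg (x - 1)), sq_nonneg (x - 1 + r), sq_nonneg (x - 1)]
  · have hd' : 1 - 2 * t ≤ d := by
      nlinarith [mul_nonneg (sub_nonneg.2 hc1) (sub_nonneg.2 h)]
    have h4 := mul_le_mul_of_nonneg_left hd' hM.le
    have h5 : x ^ 2 ≤ (1 + 0.73 * r) ^ 2 := sq_le_sq' (by linarith [(abs_le.1 hx).1]) (abs_le.1 hx).2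
    have h6 : (1 + 4 * r) ^ 2 * (1 - 1.14 * r) ≤ (1 + 4 * r) ^ 2 * (1 - 2 * t) :=
      mul_le_mul_of_nonneg_left (by linarith) hM.le
    have h7 : t ^ 2 ≤ 0.18 * r := by nlinarith
    nlinarith [mul_pos hr hr, mul_nonneg (mul_pos hr hr).le (sub_nonneg.2 hr')]

lemma rotW_eq (N : ℕ) (k : ℤ) :
    rotW N k = Complex.exp (((Real.pi * k / (2 * ((N : ℝ) + 1)) : ℝ) : ℂ) * Complex.I) := by
  unfold rotW
  congr 1
  push_cast
  ring

lemma normSq_denominator {w : ℂ} (hw : ‖w‖ = 1) (z : ℂ) :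
    ‖1 - z + w * z‖ ^ 2 =
      1 + 2 * (1 - w.re) * (z.re ^ 2 + z.im ^ 2 - z.re) - 2 * (w.im * z.im) := by
  have h : w.re ^ 2 + w.im ^ 2 = 1 := by
    have := Complex.sq_norm w
    rw [hw, Complex.normSq_apply] at this
    nlinarith
  rw [Complex.sq_norm, Complex.normSq_apply]
  simp only [Complex.add_re, Complex.sub_re, Complex.one_re, Complex.mul_re, Complex.add_im,
    Complex.sub_im, Complex.one_im, Complex.mul_im]
  linear_combination (z.re ^ 2 + z.im ^ 2) * h

lemma norm_lt_denominator {a : ℝ} (h0 : 0 < a) (h1 : a ≤ 1 / 2)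
    {N : ℕ} (hN : (N : ℝ) + 1 ≤ 2 * Real.pi / (6 * Real.sqrt a))
    {k : ℤ} (hk : |k| ≤ (N : ℤ)) {z : ℂ} (hz : z ∈ Ua a) :
    ‖z‖ < (1 + 4 * Real.sqrt a) * ‖1 - z + rotW N k * z‖ := by
  obtain ⟨hx, hy⟩ := Ua_bounds h0 h1 hz
  have hr : 0 < Real.sqrt a := Real.sqrt_pos.2 h0
  have hra : Real.sqrt a ^ 2 = a := Real.sq_sqrt h0.le
  set r := Real.sqrt a
  have hw : ‖rotW N k‖ = 1 := by rw [rotW_eq, Complex.norm_exp_ofReal_mul_I]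
  have hz2 : ‖z‖ ^ 2 = z.re ^ 2 + |z.im| ^ 2 := by
    rw [Complex.sq_norm, Complex.normSq_apply, sq_abs]; ring
  have hp : 0 < 1 - a ^ 2 := by nlinarith
  have hq : 0 < 1 - a := by linarith
  refine lt_of_pow_lt_pow_left₀ 2 (by positivity) ?_
  rw [mul_pow, hz2]
  rcases Nat.eq_zero_or_pos N with rfl | hNpos
  · have hk0 : k = 0 := by simpa using hk
    subst hk0
    have hw1 : rotW 0 0 = 1 := by simp [rotW]
    rw [hw1]
    have hr1 : r ≤ 0.71 := by nlinarith
    have hx' : |z.re| ≤ 1 + 1.5 * r := hx.trans (by rw [div_le_iff₀ hq]; nlinarith)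
    have hy' : |z.im| ≤ r := hy.trans (by
      rw [div_le_iff₀ hp, ← hra]
      nlinarith [pow_le_pow_left₀ hr.le hr1 2, pow_le_pow_left₀ hr.le hr1 4])
    have hx2 : z.re ^ 2 ≤ (1 + 1.5 * r) ^ 2 :=
      sq_le_sq' (by linarith [(abs_le.1 hx').1]) (abs_le.1 hx').2
    have hy2 : |z.im| ^ 2 ≤ r ^ 2 := pow_le_pow_left₀ (abs_nonneg _) hy' 2
    have e : (1 : ℂ) - z + 1 * z = 1 := by ring
    rw [e, norm_one]
    nlinarith
  · have hN1 : (1 : ℝ) ≤ N := by exact_mod_cast hNpos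
    -- `2 ≤ N + 1 ≤ π / (3r)` gives `r ≤ π / 6`.
    have hr1 : r ≤ 0.524 := by
      rw [le_div_iff₀ (by positivity)] at hN
      nlinarith [Real.pi_lt_d4]
    have hr2 : r ^ 2 ≤ 0.524 ^ 2 := pow_le_pow_left₀ hr.le hr1 2
    have hr4 : r ^ 4 ≤ 0.524 ^ 4 := pow_le_pow_left₀ hr.le hr1 4
    have hx' : |z.re| ≤ 1 + 0.73 * r := hx.trans (by
      rw [div_le_iff₀ hq, ← hra]
      nlinarith [mul_le_mul_of_nonneg_left hr2 hr.le, mul_le_mul_of_nonneg_left hr1 hr.le])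
    have hy' : |z.im| ≤ 0.57 * r := hy.trans (by
      rw [div_le_iff₀ hp, ← hra]
      nlinarith [mul_le_mul_of_nonneg_left hr4 hr.le, mul_le_mul_of_nonneg_left hr1 hr.le])
    have hc0 : 0 ≤ (rotW N k).re := by
      rw [rotW_eq, Complex.exp_ofReal_mul_I_re]
      have hkR : |(k : ℝ)| ≤ N := by exact_mod_cast hk
      apply Real.cos_nonneg_of_mem_Icc
      rw [Set.mem_Icc, ← abs_le, abs_div, abs_mul, abs_of_pos Real.pi_pos,
        abs_of_pos (by positivity : (0 : ℝ) < 2 * (N + 1)), div_le_iff₀ (by positivity)]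
      nlinarith [Real.pi_pos]
    have hc1 : (rotW N k).re ≤ 1 := (Complex.re_le_norm _).trans hw.le
    have hs : |(rotW N k).im| ≤ 1 := (Complex.abs_im_le_norm _).trans hw.le
    refine core_ineq hr hr1 (abs_nonneg _) hy' hx' hc0 hc1 ?_
    rw [normSq_denominator hw, sq_abs]
    have : (rotW N k).im * z.im ≤ |z.im| := by
      refine (le_abs_self _).trans ?_
      rw [abs_mul]
      exact mul_le_of_le_one_left (abs_nonneg _) hs
    linarith

/-- For `a ∈ (0,1/2]`, `N + 1 ≤ 2π/(6√a)`, `|β*| ≤ 1`, and `|k| ≤ N`,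
the image `M_k` of `U_a` under `μ_k` is contained in `D(0, |β*| + 4√a)`. -/
theorem tubes_bounded (a : ℝ) (ha : a ∈ Set.Ioc (0 : ℝ) (1 / 2))
    (N : ℕ) (hN : (N : ℝ) + 1 ≤ 2 * Real.pi / (6 * Real.sqrt a))
    (βs : ℂ) (hβ : ‖βs‖ ≤ 1)
    (k : ℤ) (hk : |k| ≤ (N : ℤ)) :
    Mset βs N a k ⊆ Metric.ball (0 : ℂ) (‖βs‖ + 4 * Real.sqrt a) := by
  rintro _ ⟨z, ⟨hz, hne⟩, rfl⟩
  have hr : 0 < Real.sqrt a := Real.sqrt_pos.2 ha.1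
  have hw : ‖rotW N k‖ = 1 := by rw [rotW_eq, Complex.norm_exp_ofReal_mul_I]
  have h := norm_lt_denominator ha.1 ha.2 hN hk hz
  have hd : 0 < ‖1 - z + rotW N k * z‖ := norm_pos_iff.2 hne
  rw [mem_ball_zero_iff, mobiusArc, norm_div, norm_mul, norm_mul, hw, mul_one, div_lt_iff₀ hd]
  rcases (norm_nonneg βs).eq_or_lt with hb | hb
  · rw [← hb, zero_mul, zero_add]
    exact mul_pos (by linarith) hd
  · calc ‖βs‖ * ‖z‖ < ‖βs‖ * ((1 + 4 * Real.sqrt a) * ‖1 - z + rotW N k * z‖) := by gcongr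
      _ = (‖βs‖ + ‖βs‖ * (4 * Real.sqrt a)) * ‖1 - z + rotW N k * z‖ := by ring
      _ ≤ (‖βs‖ + 4 * Real.sqrt a) * ‖1 - z + rotW N k * z‖ :=
        mul_le_mul_of_nonneg_right (by nlinarith) hd.le
end

section
/- Let a < b be reals, let x* ∈ (a,b), and let f, g : [a,b] → ℝ be three times continuously differentiable on (a,b) and continuous on [a,b], with g'(x*) = 0, g''(x*) < 0, and f(x*) > 0. Then for every α ∈ (0, 1/6), the ratio [ √(n/(2π)) · ∫_{x* − n^{−1/2+α}}^{x* + n^{−1/2+α}} f(x)·exp(n·g(x)) dx ] / [ |g''(x*)|^{−1/2} · f(x*) · exp(n·g(x*)) ] tends to 1 as n → ∞. -/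
/-!
Rescale by `x = x* + t / √n`. The window becomes `|t| ≤ n ^ α`, and the factor `√n` cancels the
Jacobian. By Taylor's formula with Peano remainder, `g x - g x* = ψ x * (x - x*) ^ 2` where
`ψ x → g''(x*) / 2` as `x → x*` (`exists_quadratic_factor`), so the rescaled integrand is
`f (x* + t / √n) * exp (ψ (x* + t / √n) * t ^ 2)`.

It converges pointwise to `f x* * exp (g''(x*) / 2 * t ^ 2)`. Since the window shrinks to `x*`
(because `α < 1 / 2`), for large `n` the integrand is bounded on the whole window by the
integrable function `(f x* + 1) * exp (g''(x*) / 4 * t ^ 2)`. Dominated convergence and the Gaussian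
integral give the limit `f x* * √(2π / |g''(x*)|)` (`tendsto_rescaled_integral`).
-/

open Filter intervalIntegral

/-- Second-order Taylor expansion with Peano remainder at a critical point, in multiplicative form:
`g x - g x₀` is `(x - x₀) ^ 2` times a factor that tends to half the second derivative. -/
lemma exists_quadratic_factor {a b x₀ : ℝ} (hx₀ : x₀ ∈ Set.Ioo a b) {g : ℝ → ℝ}
    (hg : ContDiffOn ℝ 2 g (Set.Ioo a b)) (hg' : deriv g x₀ = 0) :
    ∃ ψ : ℝ → ℝ, Tendsto ψ (nhds x₀) (nhds (deriv (deriv g) x₀ / 2)) ∧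
      ∀ x, g x = g x₀ + ψ x * (x - x₀) ^ 2 := by
  have h := taylor_isLittleO (n := 2) (convex_Ioo a b) hx₀ (by exact_mod_cast hg)
  rw [isOpen_Ioo.nhdsWithin_eq hx₀] at h
  have ht : ∀ x, taylorWithinEval g 2 (Set.Ioo a b) x₀ x
      = g x₀ + deriv (deriv g) x₀ / 2 * (x - x₀) ^ 2 := by
    intro x
    rw [taylorWithinEval_succ, taylorWithinEval_succ, taylor_within_zero_eval,
      iteratedDerivWithin_of_isOpen isOpen_Ioo hx₀, iteratedDerivWithin_of_isOpen isOpen_Ioo hx₀]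
    simp [iteratedDeriv_succ, hg']
    ring
  refine ⟨fun x => deriv (deriv g) x₀ / 2 +
    (g x - taylorWithinEval g 2 (Set.Ioo a b) x₀ x) / (x - x₀) ^ 2, ?_, ?_⟩
  · simpa using h.tendsto_div_nhds_zero.const_add (deriv (deriv g) x₀ / 2)
  · intro x
    rcases eq_or_ne x x₀ with rfl | hx
    · simp
    · have : x - x₀ ≠ 0 := sub_ne_zero.2 hx
      simp only [ht]
      field_simp
      ring

/-- The rescaled window `|t| ≤ n ^ α` corresponds to a window around `x₀` whose radius tends to
`0`, so it eventually lies in any neighbourhood of `x₀`. -/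
lemma eventually_window {x₀ α : ℝ} (hα : α < 1 / 2) {p : ℝ → Prop} (hp : ∀ᶠ x in nhds x₀, p x) :
    ∀ᶠ n : ℕ in atTop, ∀ t ∈ Set.Icc (-(n : ℝ) ^ α) ((n : ℝ) ^ α), p (x₀ + t / √n) := by
  obtain ⟨δ, hδ, hball⟩ := Metric.eventually_nhds_iff.1 hp
  have hlim : Tendsto (fun n : ℕ => (n : ℝ) ^ (-(1 / 2 - α))) atTop (nhds 0) :=
    (tendsto_rpow_neg_atTop (by linarith)).comp tendsto_natCast_atTop_atTop
  filter_upwards [hlim.eventually_lt_const hδ, eventually_gt_atTop 0] with n hn hn0 t ht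
  have hn0' : (0 : ℝ) < n := by exact_mod_cast hn0
  apply hball
  rw [Real.dist_eq, add_sub_cancel_left, abs_div, abs_of_pos (Real.sqrt_pos.2 hn0')]
  calc |t| / √n ≤ (n : ℝ) ^ α / √n := by
        gcongr
        exact abs_le.2 ht
    _ = (n : ℝ) ^ (-(1 / 2 - α)) := by
        rw [Real.sqrt_eq_rpow, ← Real.rpow_sub hn0']
        ring_nf
    _ < δ := hn

lemma tendsto_rescaled_integral {f g ψ : ℝ → ℝ} {x₀ L α : ℝ} (hL : L < 0) (hfpos : 0 < f x₀)
    (hf : ∀ᶠ x in nhds x₀, ContinuousAt f x) (hg : ∀ᶠ x in nhds x₀, ContinuousAt g x)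
    (hψ : Tendsto ψ (nhds x₀) (nhds (L / 2))) (hgψ : ∀ x, g x = g x₀ + ψ x * (x - x₀) ^ 2)
    (hα0 : 0 < α) (hα : α < 1 / 2) :
    Tendsto (fun n : ℕ => ∫ t in (-(n : ℝ) ^ α)..((n : ℝ) ^ α),
        f (x₀ + t / √n) * Real.exp (n * (g (x₀ + t / √n) - g x₀))) atTop
      (nhds (f x₀ * √(Real.pi / (-L / 2)))) := by
  set G : ℕ → ℝ → ℝ := fun n t =>
    f (x₀ + t / √n) * Real.exp (n * (g (x₀ + t / √n) - g x₀)) with hG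
  have hGψ : ∀ n : ℕ, 0 < n → ∀ t, G n t =
      f (x₀ + t / √n) * Real.exp (ψ (x₀ + t / √n) * t ^ 2) := by
    intro n hn t
    have hn' : (0 : ℝ) < n := by exact_mod_cast hn
    have hs := Real.sq_sqrt hn'.le
    simp only [hG]
    rw [hgψ (x₀ + t / √n), add_sub_cancel_left, add_sub_cancel_left, div_pow, hs]
    congr 2
    field_simp
  have hind : ∀ n : ℕ, ∫ t in (-(n : ℝ) ^ α)..((n : ℝ) ^ α), G n t =
      ∫ t, (Set.Ioc (-(n : ℝ) ^ α) ((n : ℝ) ^ α)).indicator (G n) t := by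
    intro n
    have : (0 : ℝ) ≤ (n : ℝ) ^ α := by positivity
    rw [intervalIntegral.integral_of_le (by linarith),
      MeasureTheory.integral_indicator measurableSet_Ioc]
  have hlim : f x₀ * √(Real.pi / (-L / 2)) = ∫ t : ℝ, f x₀ * Real.exp (L / 2 * t ^ 2) := by
    rw [MeasureTheory.integral_const_mul, ← integral_gaussian]
    congr 3
    ext t
    ring_nf
  rw [hlim]
  refine Tendsto.congr (fun n => (hind n).symm) ?_
  refine MeasureTheory.tendsto_integral_filter_of_dominated_convergence
    (fun t => (f x₀ + 1) * Real.exp (-(-L / 4) * t ^ 2)) ?_ ?_ ?_ ?_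
  · filter_upwards [eventually_window hα hf, eventually_window hα hg] with n hfn hgn
    rw [aestronglyMeasurable_indicator_iff measurableSet_Ioc]
    refine ContinuousOn.aestronglyMeasurable (fun t ht => ?_) measurableSet_Ioc
    have ht' := Set.Ioc_subset_Icc_self ht
    have hx : ContinuousAt (fun t : ℝ => x₀ + t / √n) t := by fun_prop
    have h1 : ContinuousAt (fun t : ℝ => f (x₀ + t / √n)) t :=
      ContinuousAt.comp (g := f) (hfn t ht') hx
    have h2 : ContinuousAt (fun t : ℝ => g (x₀ + t / √n)) t :=
      ContinuousAt.comp (g := g) (hgn t ht') hx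
    exact ContinuousAt.continuousWithinAt (by simp only [hG]; fun_prop)
  · have hb : ∀ᶠ x in nhds x₀, |f x| < f x₀ + 1 :=
      hf.self_of_nhds.abs.eventually_lt_const (by simp only [abs_of_pos hfpos]; linarith)
    have hψb : ∀ᶠ x in nhds x₀, ψ x < L / 4 := hψ.eventually_lt_const (by linarith)
    filter_upwards [eventually_window hα hb, eventually_window hα hψb,
      eventually_gt_atTop 0] with n hfn hψn hn
    refine Eventually.of_forall fun t => ?_
    by_cases ht : t ∈ Set.Ioc (-(n : ℝ) ^ α) ((n : ℝ) ^ α)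
    · have ht' := Set.Ioc_subset_Icc_self ht
      rw [Set.indicator_of_mem ht, hGψ n hn, norm_mul, Real.norm_eq_abs, Real.norm_eq_abs,
        Real.abs_exp]
      have h1 := (hfn t ht').le
      have h2 : ψ (x₀ + t / √n) ≤ -(-L / 4) := by linarith [hψn t ht']
      gcongr
    · rw [Set.indicator_of_notMem ht, norm_zero]
      positivity
  · exact (integrable_exp_neg_mul_sq (by linarith)).const_mul _
  · refine Eventually.of_forall fun t => ?_
    have hsqrt : Tendsto (fun n : ℕ => √(n : ℝ)) atTop atTop :=
      Real.tendsto_sqrt_atTop.comp tendsto_natCast_atTop_atTop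
    have hx : Tendsto (fun n : ℕ => x₀ + t / √n) atTop (nhds x₀) := by
      simpa using (hsqrt.const_div_atTop t).const_add x₀
    have hmain : Tendsto (fun n : ℕ =>
        f (x₀ + t / √n) * Real.exp (ψ (x₀ + t / √n) * t ^ 2)) atTop
        (nhds (f x₀ * Real.exp (L / 2 * t ^ 2))) :=
      (hf.self_of_nhds.tendsto.comp hx).mul
        ((Real.continuous_exp.tendsto _).comp ((hψ.comp hx).mul_const (t ^ 2)))
    refine hmain.congr' ?_
    have hpow : Tendsto (fun n : ℕ => (n : ℝ) ^ α) atTop atTop :=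
      (tendsto_rpow_atTop hα0).comp tendsto_natCast_atTop_atTop
    filter_upwards [hpow.eventually_gt_atTop |t|, eventually_gt_atTop 0] with n hn hn0
    have ht := abs_lt.1 hn
    have hmem : t ∈ Set.Ioc (-(n : ℝ) ^ α) ((n : ℝ) ^ α) := ⟨ht.1, ht.2.le⟩
    rw [Set.indicator_of_mem hmem, hGψ n hn0]

/-- (Laplace approximation on a shrinking window.)  If `f, g` are `C³` on
`(a,b)` and continuous on `[a,b]`, `g'(x*) = 0 > g''(x*)`, and `f(x*) > 0`, then for every
`α ∈ (0, 1/6)`,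
`√(n/2π)·∫_{x*−n^{−1/2+α}}^{x*+n^{−1/2+α}} f·e^{n g} / (|g''(x*)|^{−1/2} f(x*) e^{n g(x*)}) → 1`. -/
theorem laplace_approximation (a b : ℝ) (hab : a < b) (xs : ℝ) (hxs : xs ∈ Set.Ioo a b)
    (f g : ℝ → ℝ)
    (hf_cont : ContinuousOn f (Set.Icc a b)) (hf : ContDiffOn ℝ 3 f (Set.Ioo a b))
    (hg_cont : ContinuousOn g (Set.Icc a b)) (hg : ContDiffOn ℝ 3 g (Set.Ioo a b))
    (hg' : deriv g xs = 0) (hg'' : deriv (deriv g) xs < 0) (hfpos : 0 < f xs)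
    (α : ℝ) (hα : α ∈ Set.Ioo (0 : ℝ) (1 / 6)) :
    Tendsto (fun n : ℕ =>
        (Real.sqrt (n / (2 * Real.pi)) *
          ∫ x in (xs - (n : ℝ) ^ (-(1 / 2 : ℝ) + α))..(xs + (n : ℝ) ^ (-(1 / 2 : ℝ) + α)),
            f x * Real.exp (n * g x)) /
        (|deriv (deriv g) xs| ^ (-(1 / 2) : ℝ) * f xs * Real.exp (n * g xs)))
      atTop (nhds 1) := by
  obtain ⟨hα0, hα6⟩ := hα
  obtain ⟨ψ, hψ, hgψ⟩ := exists_quadratic_factor hxs (hg.of_le (by norm_num)) hg'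
  set L := deriv (deriv g) xs with hL
  have hnhds : ∀ᶠ x in nhds xs, x ∈ Set.Ioo a b := isOpen_Ioo.mem_nhds hxs
  have hcont : ∀ {h : ℝ → ℝ}, ContDiffOn ℝ 3 h (Set.Ioo a b) →
      ∀ᶠ x in nhds xs, ContinuousAt h x := fun hh =>
    hnhds.mono fun x hx => hh.continuousOn.continuousAt (isOpen_Ioo.mem_nhds hx)
  have key := tendsto_rescaled_integral hg'' hfpos (hcont hf) (hcont hg) hψ hgψ hα0
    (by linarith)
  have hC : f xs * √(Real.pi / (-L / 2)) = √(2 * Real.pi) * (|L| ^ (-(1 / 2) : ℝ) * f xs) := by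
    have hL0 : 0 < -L := by linarith
    rw [abs_of_neg hg'', Real.rpow_neg hL0.le, ← Real.sqrt_eq_rpow,
      show Real.pi / (-L / 2) = 2 * Real.pi / (-L) by field_simp, Real.sqrt_div (by positivity)]
    ring
  have hCpos : 0 < √(2 * Real.pi) * (|L| ^ (-(1 / 2) : ℝ) * f xs) := by
    have : 0 < |L| := abs_pos.2 hg''.ne
    positivity
  rw [hC] at key
  have key' := key.div_const (√(2 * Real.pi) * (|L| ^ (-(1 / 2) : ℝ) * f xs))
  rw [div_self hCpos.ne'] at key'
  refine key'.congr' ?_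
  filter_upwards [eventually_gt_atTop 0] with n hn
  have hn' : (0 : ℝ) < n := by exact_mod_cast hn
  have hs : 0 < √(n : ℝ) := Real.sqrt_pos.2 hn'
  have hw : (n : ℝ) ^ α / √n = (n : ℝ) ^ (-(1 / 2 : ℝ) + α) := by
    rw [Real.sqrt_eq_rpow, ← Real.rpow_sub hn']
    ring_nf
  have hsub := intervalIntegral.integral_comp_add_div (a := -(n : ℝ) ^ α) (b := (n : ℝ) ^ α)
    (fun x => f x * Real.exp (n * (g x - g xs))) hs.ne' xs
  rw [neg_div, hw, ← sub_eq_add_neg, smul_eq_mul] at hsub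
  have hexp : ∀ x, f x * Real.exp (n * g x)
      = Real.exp (n * g xs) * (f x * Real.exp (n * (g x - g xs))) := by
    intro x
    rw [mul_left_comm, ← Real.exp_add]
    ring_nf
  simp_rw [hexp]
  rw [intervalIntegral.integral_const_mul, hsub, Real.sqrt_div hn'.le]
  have hE := Real.exp_pos (n * g xs)
  have hA : 0 < |L| ^ (-(1 / 2) : ℝ) := Real.rpow_pos_of_pos (abs_pos.2 hg''.ne) _
  have hpi : 0 < √(2 * Real.pi) := by positivity
  generalize |L| ^ (-(1 / 2) : ℝ) = A at *
  generalize √(2 * Real.pi) = P at *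
  field_simp
end
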